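/- arXiv:2011.03434 — 3 statements merged into one kernel-verified Lean document; each statement's English description precedes it below -/
import Mathlib

section
/- Let M be a maximum matching in G. Then M is a popular max-matching if and only if (1) there is no alternating cycle C with respect to M such that wt_M(C) > 0, and (2) there is no alternating path p with respect to M having an endpoint that is unmatched in M such that wt_M(p) > 0. -/
open Classical

noncomputable section

namespace PopMax

/-- A bipartite preference instance `G = (A ∪ B, E)`:
`E a b` says there is an edge between `a ∈ A` and `b ∈ B`;
`prefA a b b'` says `a` strictly prefers `b` to `b'`;
`prefB b a a'` says `b` strictly prefers `a` to `a'`. -/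
structure PrefSys (A : Type*) (B : Type*) where
  E : A → B → Prop
  prefA : A → B → B → Prop
  prefB : B → A → A → Prop

/-- Every node has a strict (linear) preference order over its neighbors. -/
def PrefSys.IsValid {A B : Type*} (I : PrefSys A B) : Prop :=
  (∀ a b, ¬ I.prefA a b b) ∧
  (∀ a b₁ b₂ b₃, I.prefA a b₁ b₂ → I.prefA a b₂ b₃ → I.prefA a b₁ b₃) ∧
  (∀ a b₁ b₂, I.E a b₁ → I.E a b₂ → b₁ ≠ b₂ → I.prefA a b₁ b₂ ∨ I.prefA a b₂ b₁) ∧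
  (∀ b a, ¬ I.prefB b a a) ∧
  (∀ b a₁ a₂ a₃, I.prefB b a₁ a₂ → I.prefB b a₂ a₃ → I.prefB b a₁ a₃) ∧
  (∀ b a₁ a₂, I.E a₁ b → I.E a₂ b → a₁ ≠ a₂ → I.prefB b a₁ a₂ ∨ I.prefB b a₂ a₁)

variable {A B : Type*}

/-- A matching: a set of pairwise disjoint edges. -/
def IsMatching (I : PrefSys A B) (M : Finset (A × B)) : Prop :=
  (∀ p ∈ M, I.E p.1 p.2) ∧
  (∀ p ∈ M, ∀ q ∈ M, p.1 = q.1 → p = q) ∧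
  (∀ p ∈ M, ∀ q ∈ M, p.2 = q.2 → p = q)

def matchedA (M : Finset (A × B)) (a : A) : Prop := ∃ b, (a, b) ∈ M
def matchedB (M : Finset (A × B)) (b : B) : Prop := ∃ a, (a, b) ∈ M

/-- A maximum matching: a matching of maximum cardinality. -/
def IsMaximumMatching (I : PrefSys A B) (M : Finset (A × B)) : Prop :=
  IsMatching I M ∧ ∀ N : Finset (A × B), IsMatching I N → N.card ≤ M.card

/-- A perfect matching matches all nodes. -/
def IsPerfectMatching (I : PrefSys A B) (M : Finset (A × B)) : Prop :=
  IsMatching I M ∧ (∀ a, matchedA M a) ∧ (∀ b, matchedB M b)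

/-- `a ∈ A` prefers matching `M` to matching `N`. -/
def prefersA (I : PrefSys A B) (a : A) (M N : Finset (A × B)) : Prop :=
  ∃ b, (a, b) ∈ M ∧ (¬ matchedA N a ∨ ∃ b', (a, b') ∈ N ∧ I.prefA a b b')

/-- `b ∈ B` prefers matching `M` to matching `N`. -/
def prefersB (I : PrefSys A B) (b : B) (M N : Finset (A × B)) : Prop :=
  ∃ a, (a, b) ∈ M ∧ (¬ matchedB N b ∨ ∃ a', (a', b) ∈ N ∧ I.prefB b a a')

/-- A node `u ∈ A ∪ B` prefers matching `M` to matching `N`. -/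
def prefers (I : PrefSys A B) (u : A ⊕ B) (M N : Finset (A × B)) : Prop :=
  match u with
  | Sum.inl a => prefersA I a M N
  | Sum.inr b => prefersB I b M N

/-- `φ(M,N)`: the number of nodes preferring `M` to `N`. -/
def phi [Fintype A] [Fintype B] (I : PrefSys A B) (M N : Finset (A × B)) : ℕ :=
  (Finset.univ.filter (fun u : A ⊕ B => prefers I u M N)).card

/-- `Δ(M,N) = φ(M,N) − φ(N,M)`. -/
def Delta [Fintype A] [Fintype B] (I : PrefSys A B) (M N : Finset (A × B)) : ℤ :=
  (phi I M N : ℤ) - (phi I N M : ℤ)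

/-- A popular max-matching: a maximum matching `M` with `Δ(M,N) ≥ 0`
for every maximum matching `N`. -/
def IsPopularMaxMatching [Fintype A] [Fintype B] (I : PrefSys A B)
    (M : Finset (A × B)) : Prop :=
  IsMaximumMatching I M ∧
    ∀ N : Finset (A × B), IsMaximumMatching I N → 0 ≤ Delta I M N

/-- The edge `(a,b) ∉ M` blocks `M`. -/
def Blocks (I : PrefSys A B) (M : Finset (A × B)) (a : A) (b : B) : Prop :=
  I.E a b ∧ (a, b) ∉ M ∧
  (¬ matchedA M a ∨ ∃ b', (a, b') ∈ M ∧ I.prefA a b b') ∧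
  (¬ matchedB M b ∨ ∃ a', (a', b) ∈ M ∧ I.prefB b a a')

/-- A stable matching: a matching with no blocking edge. -/
def IsStable (I : PrefSys A B) (S : Finset (A × B)) : Prop :=
  IsMatching I S ∧ ∀ a b, ¬ Blocks I S a b

/-- The edge weight `wt_M(a,b) ∈ {0, ±2}`. -/
def wt (I : PrefSys A B) (M : Finset (A × B)) (a : A) (b : B) : ℤ :=
  if Blocks I M a b then 2
  else if (∃ b', (a, b') ∈ M ∧ I.prefA a b' b) ∧ (∃ a', (a', b) ∈ M ∧ I.prefB b a' a) then -2
  else 0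

/-- The underlying simple graph on the node set `A ⊕ B`. -/
def graphOf (I : PrefSys A B) : SimpleGraph (A ⊕ B) :=
  SimpleGraph.fromRel (fun u w =>
    match u, w with
    | Sum.inl a, Sum.inr b => I.E a b
    | _, _ => False)

/-- The (undirected) edge `e` is an edge of the matching `M`. -/
def edgeInM (M : Finset (A × B)) (e : Sym2 (A ⊕ B)) : Prop :=
  ∃ a b, (a, b) ∈ M ∧ e = s(Sum.inl a, Sum.inr b)

/-- Consecutive edges alternate between `M` and `E ∖ M`. -/
def altRel (M : Finset (A × B)) (e f : Sym2 (A ⊕ B)) : Prop :=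
  edgeInM M e ↔ ¬ edgeInM M f

/-- An alternating path with respect to `M`. -/
def IsAltPath (I : PrefSys A B) (M : Finset (A × B)) {u w : A ⊕ B}
    (p : (graphOf I).Walk u w) : Prop :=
  p.IsPath ∧ List.Chain' (altRel M) p.edges

/-- An alternating cycle with respect to `M` (alternation also across the wrap-around). -/
def IsAltCycle (I : PrefSys A B) (M : Finset (A × B)) {w : A ⊕ B}
    (c : (graphOf I).Walk w w) : Prop :=
  c.IsCycle ∧ List.Chain' (altRel M) (c.edges ++ c.edges.take 1)

/-- `wt_M` as a function on undirected edges. -/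
def wtSym (I : PrefSys A B) (M : Finset (A × B)) : Sym2 (A ⊕ B) → ℤ :=
  Sym2.lift ⟨fun u w =>
      match u, w with
      | Sum.inl a, Sum.inr b => wt I M a b
      | Sum.inr b, Sum.inl a => wt I M a b
      | _, _ => 0,
    by rintro (a | b) (a' | b') <;> rfl⟩

/-- `wt_M(ρ) = Σ_{e ∈ ρ} wt_M(e)` for a walk `ρ`. -/
def wtWalk (I : PrefSys A B) (M : Finset (A × B)) {u w : A ⊕ B}
    (p : (graphOf I).Walk u w) : ℤ :=
  (p.edges.map (wtSym I M)).sum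

/-- The node `u ∈ A ∪ B` is unmatched in `M`. -/
def unmatchedNode (M : Finset (A × B)) : A ⊕ B → Prop
  | Sum.inl a => ¬ matchedA M a
  | Sum.inr b => ¬ matchedB M b

/-- The set of edges `(a,b) ∈ A × B` used by the walk `p`. -/
def pairsOf [Fintype A] [Fintype B] (I : PrefSys A B) {u w : A ⊕ B}
    (p : (graphOf I).Walk u w) : Finset (A × B) :=
  Finset.univ.filter (fun ab : A × B => s(Sum.inl ab.1, Sum.inr ab.2) ∈ p.edges)

/-- `M` is Pareto-optimal: no matching `N` has `φ(N,M) > 0` and `φ(M,N) = 0`. -/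
def IsParetoOptimal [Fintype A] [Fintype B] (I : PrefSys A B) (M : Finset (A × B)) : Prop :=
  ¬ ∃ N : Finset (A × B), IsMatching I N ∧ 0 < phi I N M ∧ phi I M N = 0

/-! ### The auxiliary instance `G*` -/

/-- `A* = {a_0, …, a_{n0−1} : a ∈ A}` where `n0 = |A|`. -/
abbrev AStar (A : Type*) [Fintype A] : Type _ := A × Fin (Fintype.card A)

/-- `B* = B̃ ∪ {d_1(a), …, d_{n0−1}(a) : a ∈ A}`; the dummy node `(a, j)`
(with `j : Fin (n0 − 1)`) stands for `d_{j+1}(a)`. -/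
abbrev BStar (A : Type*) (B : Type*) [Fintype A] : Type _ :=
  B ⊕ (A × Fin (Fintype.card A - 1))

/-- The auxiliary instance `G*` with its edges and preferences. -/
def starSys [Fintype A] (I : PrefSys A B) : PrefSys (AStar A) (BStar A B) where
  E := fun ai w =>
    match ai, w with
    | (a, _i), Sum.inl b => I.E a b
    | (a, i), Sum.inr (a', j) => a = a' ∧ ((i : ℕ) = (j : ℕ) ∨ (i : ℕ) = (j : ℕ) + 1)
  prefA := fun ai u v =>
    match ai, u, v with
    | (a, _i), Sum.inl b, Sum.inl b' => I.prefA a b b'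
    | (a, i), Sum.inl _b, Sum.inr (a', j) => a = a' ∧ (j : ℕ) = (i : ℕ)
    | (a, i), Sum.inr (a', j), Sum.inl _b => a = a' ∧ (j : ℕ) + 1 = (i : ℕ)
    | (a, i), Sum.inr (a', j), Sum.inr (a'', j') =>
        a = a' ∧ a = a'' ∧ (j : ℕ) + 1 = (i : ℕ) ∧ (j' : ℕ) = (i : ℕ)
  prefB := fun w x y =>
    match w, x, y with
    | Sum.inl b, (a, i), (a', i') =>
        (i' : ℕ) < (i : ℕ) ∨ ((i : ℕ) = (i' : ℕ) ∧ I.prefB b a a')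
    | Sum.inr (a, j), (a', i), (a'', i') =>
        a' = a ∧ a'' = a ∧ (i : ℕ) = (j : ℕ) ∧ (i' : ℕ) = (j : ℕ) + 1

/-- The projection `S ↦ S'`: delete edges incident to dummy nodes and replace
`(a_i, b̃)` by `(a, b)`. -/
def proj [Fintype A] [Fintype B] (S : Finset (AStar A × BStar A B)) : Finset (A × B) :=
  Finset.univ.filter (fun ab : A × B =>
    ∃ i : Fin (Fintype.card A), ((ab.1, i), (Sum.inl ab.2 : BStar A B)) ∈ S)

/-- `a ∈ A_i` for the level partition of `A` induced by a (stable) matching `S` in `G*`: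
for `i ≤ n0 − 2`, `a ∈ A_i` iff `(a_i, b̃) ∈ S` for some `b̃ ∈ B̃`;
`A_{n0−1}` consists of all remaining nodes of `A`. -/
def AtLevelA [Fintype A] (S : Finset (AStar A × BStar A B)) (a : A) (i : ℕ) : Prop :=
  (i + 1 < Fintype.card A ∧
     ∃ j : Fin (Fintype.card A), (j : ℕ) = i ∧
       ∃ b : B, ((a, j), (Sum.inl b : BStar A B)) ∈ S) ∨
  (i + 1 = Fintype.card A ∧
     ∀ j : Fin (Fintype.card A), (j : ℕ) + 1 < Fintype.card A →
       ∀ b : B, ((a, j), (Sum.inl b : BStar A B)) ∉ S)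

/-- `b ∈ B_i` for the level partition of `B` induced by a (stable) matching `S` in `G*`:
for `1 ≤ i ≤ n0 − 1`, `b ∈ B_i` iff `(a_i, b̃) ∈ S` for some `a ∈ A_i`;
`B_0` consists of all remaining nodes of `B`. -/
def AtLevelB [Fintype A] (S : Finset (AStar A × BStar A B)) (b : B) (i : ℕ) : Prop :=
  (1 ≤ i ∧ i < Fintype.card A ∧
     ∃ j : Fin (Fintype.card A), (j : ℕ) = i ∧
       ∃ a : A, AtLevelA S a i ∧ ((a, j), (Sum.inl b : BStar A B)) ∈ S) ∨
  (i = 0 ∧ ∀ j : Fin (Fintype.card A), 1 ≤ (j : ℕ) →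
       ∀ a : A, AtLevelA S a (j : ℕ) → ((a, j), (Sum.inl b : BStar A B)) ∉ S)



/-! ### Votes -/

def vA (I : PrefSys A B) (N M : Finset (A × B)) (a : A) : ℤ :=
  (if prefersA I a N M then 1 else 0) - (if prefersA I a M N then 1 else 0)

def vB (I : PrefSys A B) (N M : Finset (A × B)) (b : B) : ℤ :=
  (if prefersB I b N M then 1 else 0) - (if prefersB I b M N then 1 else 0)

theorem Delta_eq_votes [Fintype A] [Fintype B] (I : PrefSys A B) (N M : Finset (A × B)) :
    Delta I N M = ∑ a, vA I N M a + ∑ b, vB I N M b := by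
  unfold Delta phi vA vB
  rw [Finset.card_filter, Finset.card_filter]
  push_cast
  rw [Fintype.sum_sum_type, Fintype.sum_sum_type, Finset.sum_sub_distrib, Finset.sum_sub_distrib]
  change (((∑ a, if prefersA I a N M then (1 : ℤ) else 0) + ∑ b, if prefersB I b N M then (1 : ℤ) else 0)
    - ((∑ a, if prefersA I a M N then (1 : ℤ) else 0) + ∑ b, if prefersB I b M N then (1 : ℤ) else 0)) = _
  ring

theorem Delta_neg [Fintype A] [Fintype B] (I : PrefSys A B) (N M : Finset (A × B)) :
    Delta I M N = - Delta I N M := by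
  unfold Delta; ring

theorem uniqA {I : PrefSys A B} {M : Finset (A × B)} (hM : IsMatching I M) {a : A} {b b' : B}
    (h : (a, b) ∈ M) (h' : (a, b') ∈ M) : b = b' :=
  congrArg Prod.snd (hM.2.1 _ h _ h' rfl)

theorem uniqB {I : PrefSys A B} {M : Finset (A × B)} (hM : IsMatching I M) {a a' : A} {b : B}
    (h : (a, b) ∈ M) (h' : (a', b) ∈ M) : a = a' :=
  congrArg Prod.fst (hM.2.2 _ h _ h' rfl)

theorem wt_mem {I : PrefSys A B} (hI : I.IsValid) {M : Finset (A × B)} (hM : IsMatching I M)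
    {a : A} {b : B} (h : (a, b) ∈ M) : wt I M a b = 0 := by
  unfold wt
  rw [if_neg (fun hb => hb.2.1 h), if_neg]
  rintro ⟨⟨b', hb', hp⟩, -⟩
  rw [uniqA hM hb' h] at hp
  exact hI.1 _ _ hp

theorem wt_even (I : PrefSys A B) (M : Finset (A × B)) (a : A) (b : B) : (2 : ℤ) ∣ wt I M a b := by
  unfold wt; split_ifs <;> norm_num

theorem votes_edge {I : PrefSys A B} (hI : I.IsValid) {M N : Finset (A × B)} (hM : IsMatching I M)
    (hN : IsMatching I N) {a : A} {b : B} (h : (a, b) ∈ N) :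
    vA I N M a + vB I N M b = wt I M a b := by
  obtain ⟨iA, tA, cA, iB, tB, cB⟩ := hI
  have hE := hN.1 _ h
  simp only at hE
  have uA : ∀ b', (a, b') ∈ N → b' = b := fun b' h' => uniqA hN h' h
  have uB : ∀ a', (a', b) ∈ N → a' = a := fun a' h' => uniqB hN h' h
  have e1 : prefersA I a N M ↔ (¬ matchedA M a ∨ ∃ b', (a, b') ∈ M ∧ I.prefA a b b') := by
    constructor
    · rintro ⟨b', h1, h2⟩
      rw [uA _ h1] at h2; exact h2
    · intro h2; exact ⟨b, h, h2⟩
  have e2 : prefersA I a M N ↔ ∃ b', (a, b') ∈ M ∧ I.prefA a b' b := by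
    constructor
    · rintro ⟨b', h1, h2 | ⟨b'', h2, h3⟩⟩
      · exact absurd ⟨b, h⟩ h2
      · rw [uA _ h2] at h3; exact ⟨b', h1, h3⟩
    · rintro ⟨b', h1, h2⟩; exact ⟨b', h1, Or.inr ⟨b, h, h2⟩⟩
  have e3 : prefersB I b N M ↔ (¬ matchedB M b ∨ ∃ a', (a', b) ∈ M ∧ I.prefB b a a') := by
    constructor
    · rintro ⟨b', h1, h2⟩
      rw [uB _ h1] at h2; exact h2
    · intro h2; exact ⟨a, h, h2⟩
  have e4 : prefersB I b M N ↔ ∃ a', (a', b) ∈ M ∧ I.prefB b a' a := by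
    constructor
    · rintro ⟨b', h1, h2 | ⟨b'', h2, h3⟩⟩
      · exact absurd ⟨a, h⟩ h2
      · rw [uB _ h2] at h3; exact ⟨b', h1, h3⟩
    · rintro ⟨b', h1, h2⟩; exact ⟨b', h1, Or.inr ⟨a, h, h2⟩⟩
  have x1 : (¬ matchedA M a ∨ ∃ b', (a, b') ∈ M ∧ I.prefA a b b') →
      ¬ ∃ b', (a, b') ∈ M ∧ I.prefA a b' b := by
    rintro (h1 | ⟨b1, h1, h2⟩) ⟨b2, h3, h4⟩
    · exact h1 ⟨_, h3⟩
    · rw [uniqA hM h3 h1] at h4; exact iA _ _ (tA _ _ _ _ h2 h4)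
  have x2 : (¬ matchedB M b ∨ ∃ a', (a', b) ∈ M ∧ I.prefB b a a') →
      ¬ ∃ a', (a', b) ∈ M ∧ I.prefB b a' a := by
    rintro (h1 | ⟨b1, h1, h2⟩) ⟨b2, h3, h4⟩
    · exact h1 ⟨_, h3⟩
    · rw [uniqB hM h3 h1] at h4; exact iB _ _ (tB _ _ _ _ h2 h4)
  by_cases hm : (a, b) ∈ M
  · rw [wt_mem ⟨iA, tA, cA, iB, tB, cB⟩ hM hm]
    have n1 : ¬ (¬ matchedA M a ∨ ∃ b', (a, b') ∈ M ∧ I.prefA a b b') := by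
      rintro (h1 | ⟨b1, h1, h2⟩)
      · exact h1 ⟨_, hm⟩
      · rw [uniqA hM h1 hm] at h2; exact iA _ _ h2
    have n2 : ¬ ∃ b', (a, b') ∈ M ∧ I.prefA a b' b := by
      rintro ⟨b1, h1, h2⟩
      rw [uniqA hM h1 hm] at h2; exact iA _ _ h2
    have n3 : ¬ (¬ matchedB M b ∨ ∃ a', (a', b) ∈ M ∧ I.prefB b a a') := by
      rintro (h1 | ⟨b1, h1, h2⟩)
      · exact h1 ⟨_, hm⟩
      · rw [uniqB hM h1 hm] at h2; exact iB _ _ h2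
    have n4 : ¬ ∃ a', (a', b) ∈ M ∧ I.prefB b a' a := by
      rintro ⟨b1, h1, h2⟩
      rw [uniqB hM h1 hm] at h2; exact iB _ _ h2
    simp only [vA, vB, e1, e2, e3, e4, if_neg n1, if_neg n2, if_neg n3, if_neg n4]
    norm_num
  · have y1 : (¬ matchedA M a ∨ ∃ b', (a, b') ∈ M ∧ I.prefA a b b') ∨
        ∃ b', (a, b') ∈ M ∧ I.prefA a b' b := by
      by_cases hma : matchedA M a
      · obtain ⟨b', hb'⟩ := hma
        have hne : b ≠ b' := fun he => hm (he ▸ hb')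
        rcases cA a b b' hE (hM.1 _ hb') hne with h1 | h1
        · exact Or.inl (Or.inr ⟨b', hb', h1⟩)
        · exact Or.inr ⟨b', hb', h1⟩
      · exact Or.inl (Or.inl hma)
    have y2 : (¬ matchedB M b ∨ ∃ a', (a', b) ∈ M ∧ I.prefB b a a') ∨
        ∃ a', (a', b) ∈ M ∧ I.prefB b a' a := by
      by_cases hma : matchedB M b
      · obtain ⟨b', hb'⟩ := hma
        have hne : a ≠ b' := fun he => hm (he ▸ hb')
        rcases cB b a b' hE (hM.1 _ hb') hne with h1 | h1
        · exact Or.inl (Or.inr ⟨b', hb', h1⟩)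
        · exact Or.inr ⟨b', hb', h1⟩
      · exact Or.inl (Or.inl hma)
    have hbl : Blocks I M a b ↔ ((¬ matchedA M a ∨ ∃ b', (a, b') ∈ M ∧ I.prefA a b b') ∧
        (¬ matchedB M b ∨ ∃ a', (a', b) ∈ M ∧ I.prefB b a a')) :=
      ⟨fun h => h.2.2, fun h => ⟨hE, hm, h⟩⟩
    rw [← e1, ← e2] at x1 y1
    rw [← e3, ← e4] at x2 y2
    rw [← e1, ← e3] at hbl
    simp only [vA, vB, wt, hbl, ← e2, ← e4]
    by_cases h1 : prefersA I a N M <;> by_cases h2 : prefersA I a M N <;>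
      by_cases h3 : prefersB I b N M <;> by_cases h4 : prefersB I b M N <;>
      simp [h1, h2, h3, h4] at x1 y1 x2 y2 ⊢

theorem Delta_eq [Fintype A] [Fintype B] {I : PrefSys A B} (hI : I.IsValid)
    {M N : Finset (A × B)} (hM : IsMatching I M) (hN : IsMatching I N) :
    Delta I N M = ∑ e ∈ N, wt I M e.1 e.2
      - ((Finset.univ.filter (fun a => matchedA M a ∧ ¬ matchedA N a)).card : ℤ)
      - ((Finset.univ.filter (fun b => matchedB M b ∧ ¬ matchedB N b)).card : ℤ) := by
  rw [Delta_eq_votes]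
  have hA : ∑ a, vA I N M a = ∑ e ∈ N, vA I N M e.1 -
      ((Finset.univ.filter (fun a => matchedA M a ∧ ¬ matchedA N a)).card : ℤ) := by
    have h1 : ∑ e ∈ N, vA I N M e.1 = ∑ a ∈ Finset.univ.filter (fun a => matchedA N a), vA I N M a := by
      have : Finset.univ.filter (fun a => matchedA N a) = N.image Prod.fst := by
        ext a; rw [Finset.mem_filter]; simp [matchedA]
      rw [this, Finset.sum_image]
      intro x hx y hy hxy; exact hN.2.1 _ hx _ hy hxy
    rw [h1, ← Finset.sum_filter_add_sum_filter_not Finset.univ (fun a => matchedA N a), sub_eq_add_neg]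
    congr 1
    rw [Finset.card_filter]
    push_cast
    rw [Finset.sum_filter, ← Finset.sum_neg_distrib]
    apply Finset.sum_congr rfl
    intro a _
    by_cases h : matchedA N a
    · simp [h]
    · have n1 : ¬ prefersA I a N M := fun ⟨b, hb, _⟩ => h ⟨b, hb⟩
      have n2 : prefersA I a M N ↔ matchedA M a :=
        ⟨fun ⟨b, hb, _⟩ => ⟨b, hb⟩, fun ⟨b, hb⟩ => ⟨b, hb, Or.inl h⟩⟩
      simp [vA, h, n1, n2]
  have hB : ∑ a, vB I N M a = ∑ e ∈ N, vB I N M e.2 -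
      ((Finset.univ.filter (fun a => matchedB M a ∧ ¬ matchedB N a)).card : ℤ) := by
    have h1 : ∑ e ∈ N, vB I N M e.2 = ∑ a ∈ Finset.univ.filter (fun a => matchedB N a), vB I N M a := by
      have : Finset.univ.filter (fun a => matchedB N a) = N.image Prod.snd := by
        ext a; rw [Finset.mem_filter]; simp [matchedB]
      rw [this, Finset.sum_image]
      intro x hx y hy hxy; exact hN.2.2 _ hx _ hy hxy
    rw [h1, ← Finset.sum_filter_add_sum_filter_not Finset.univ (fun a => matchedB N a), sub_eq_add_neg]
    congr 1
    rw [Finset.card_filter]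
    push_cast
    rw [Finset.sum_filter, ← Finset.sum_neg_distrib]
    apply Finset.sum_congr rfl
    intro a _
    by_cases h : matchedB N a
    · simp [h]
    · have n1 : ¬ prefersB I a N M := fun ⟨b, hb, _⟩ => h ⟨b, hb⟩
      have n2 : prefersB I a M N ↔ matchedB M a :=
        ⟨fun ⟨b, hb, _⟩ => ⟨b, hb⟩, fun ⟨b, hb⟩ => ⟨b, hb, Or.inl h⟩⟩
      simp [vB, h, n1, n2]
  have hw : ∑ e ∈ N, wt I M e.1 e.2 = ∑ e ∈ N, vA I N M e.1 + ∑ e ∈ N, vB I N M e.2 := by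
    rw [← Finset.sum_add_distrib]
    apply Finset.sum_congr rfl
    rintro ⟨a, b⟩ h
    exact (votes_edge hI hM hN h).symm
  rw [hA, hB, hw]; ring


theorem core_A [Fintype A] [Fintype B] {I : PrefSys A B} (hI : I.IsValid)
    {M : Finset (A × B)} (hpop : IsPopularMaxMatching I M) (k : ℕ) (a : ℕ → A) (b : ℕ → B)
    (hE : ∀ i < k, I.E (a i) (b i)) (hnM : ∀ i < k, (a i, b i) ∉ M)
    (ha : ∀ i < k, ∀ j < k, a i = a j → i = j) (hb : ∀ i < k, ∀ j < k, b i = b j → i = j)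
    (hA : ∀ i, i + 1 < k → (a (i + 1), b i) ∈ M)
    (h0 : ¬ matchedA M (a 0) ∨ (a 0, b (k - 1)) ∈ M) :
    ∑ i ∈ Finset.range k, wt I M (a i) (b i) ≤ 0 := by
  obtain ⟨⟨hM, hmax⟩, hpop⟩ := hpop
  by_contra hpos
  push Not at hpos
  have hk : 0 < k := by
    rcases Nat.eq_zero_or_pos k with h | h
    · subst h; simp at hpos
    · exact h
  have hfact : ∀ i < k, ∀ b0, (a i, b0) ∈ M → ∃ j < k, b0 = b j := by
    intro i hi b0 hm
    rcases i with _ | i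
    · rcases h0 with h0 | h0
      · exact absurd ⟨_, hm⟩ h0
      · exact ⟨k - 1, by omega, uniqA hM hm h0⟩
    · exact ⟨i, by omega, uniqA hM hm (hA i hi)⟩
  set P : Finset (A × B) := (Finset.range k).image (fun i => (a i, b i)) with hP
  set Q : Finset (A × B) := M.filter (fun e => ∀ i < k, e.2 ≠ b i) with hQ
  have memP : ∀ e, e ∈ P ↔ ∃ i < k, e = (a i, b i) := by
    intro e; simp [hP, eq_comm]
  have memQ : ∀ e, e ∈ Q ↔ e ∈ M ∧ ∀ i < k, e.2 ≠ b i := by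
    intro e; rw [hQ, Finset.mem_filter]
  have hinj : Set.InjOn (fun i => (a i, b i)) (Finset.range k : Set ℕ) := by
    intro i hi j hj hij
    simp only [Finset.coe_range, Set.mem_Iio] at hi hj
    exact ha i hi j hj (congrArg Prod.fst hij)
  have hPc : P.card = k := by
    rw [hP, Finset.card_image_of_injOn hinj, Finset.card_range]
  have hdis : Disjoint P Q := by
    rw [Finset.disjoint_left]
    intro e h1 h2
    obtain ⟨i, hi, rfl⟩ := (memP e).1 h1
    exact ((memQ _).1 h2).2 i hi rfl
  have hNm : IsMatching I (P ∪ Q) := by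
    refine ⟨?_, ?_, ?_⟩
    · intro e he
      rcases Finset.mem_union.1 he with h | h
      · obtain ⟨i, hi, rfl⟩ := (memP e).1 h
        exact hE i hi
      · exact hM.1 _ ((memQ e).1 h).1
    · intro e he f hf hef
      rcases Finset.mem_union.1 he with h | h <;> rcases Finset.mem_union.1 hf with h' | h'
      · obtain ⟨i, hi, rfl⟩ := (memP e).1 h
        obtain ⟨j, hj, rfl⟩ := (memP f).1 h'
        rw [ha i hi j hj hef]
      · obtain ⟨i, hi, rfl⟩ := (memP e).1 h
        obtain ⟨f1, f2⟩ := f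
        obtain ⟨hm, hn⟩ := (memQ _).1 h'
        simp only at hef; subst hef
        obtain ⟨j, hj, e⟩ := hfact i hi _ hm
        exact absurd e (hn j hj)
      · obtain ⟨i, hi, rfl⟩ := (memP f).1 h'
        obtain ⟨f1, f2⟩ := e
        obtain ⟨hm, hn⟩ := (memQ _).1 h
        simp only at hef; subst hef
        obtain ⟨j, hj, e⟩ := hfact i hi _ hm
        exact absurd e (hn j hj)
      · exact hM.2.1 _ ((memQ e).1 h).1 _ ((memQ f).1 h').1 hef
    · intro e he f hf hef
      rcases Finset.mem_union.1 he with h | h <;> rcases Finset.mem_union.1 hf with h' | h'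
      · obtain ⟨i, hi, rfl⟩ := (memP e).1 h
        obtain ⟨j, hj, rfl⟩ := (memP f).1 h'
        rw [hb i hi j hj hef]
      · obtain ⟨i, hi, rfl⟩ := (memP e).1 h
        exact absurd hef.symm (((memQ _).1 h').2 i hi)
      · obtain ⟨i, hi, rfl⟩ := (memP f).1 h'
        exact absurd hef (((memQ _).1 h).2 i hi)
      · exact hM.2.2 _ ((memQ e).1 h).1 _ ((memQ f).1 h').1 hef
  have hcard : M.card ≤ (P ∪ Q).card := by
    rw [Finset.card_union_of_disjoint hdis, hPc]
    rw [← Finset.card_filter_add_card_filter_not (s := M) (fun e => ∀ i < k, e.2 ≠ b i), ← hQ, add_comm]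
    apply Nat.add_le_add_right
    have : (M.filter (fun e => ¬ ∀ i < k, e.2 ≠ b i)).card ≤ ((Finset.range k).image b).card := by
      apply Finset.card_le_card_of_injOn Prod.snd
      · intro e he
        have he := (Finset.mem_filter.1 he).2
        push Not at he
        obtain ⟨i, hi, h⟩ := he
        simp only [Finset.coe_image, Set.mem_image, Finset.coe_range, Set.mem_Iio]
        exact ⟨i, hi, h.symm⟩
      · intro e he f hf hef
        exact hM.2.2 _ (Finset.mem_filter.1 he).1 _ (Finset.mem_filter.1 hf).1 hef
    exact this.trans (Finset.card_image_le.trans (by simp))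
  have hD := hpop (P ∪ Q) ⟨hNm, fun N hN => (hmax N hN).trans hcard⟩
  rw [Delta_neg, Delta_eq hI hM hNm, Finset.sum_union hdis, hP, Finset.sum_image hinj, ← hP] at hD
  have hQ0 : ∑ e ∈ Q, wt I M e.1 e.2 = 0 :=
    Finset.sum_eq_zero (fun e he => wt_mem hI hM ((memQ e).1 he).1)
  have hB0 : (Finset.univ.filter (fun y => matchedB M y ∧ ¬ matchedB (P ∪ Q) y)).card = 0 := by
    rw [Finset.card_eq_zero, Finset.filter_eq_empty_iff]
    rintro y - ⟨⟨x, hx⟩, hn⟩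
    apply hn
    by_cases h : ∀ i < k, y ≠ b i
    · exact ⟨x, Finset.mem_union_right _ ((memQ _).2 ⟨hx, h⟩)⟩
    · push Not at h
      obtain ⟨i, hi, rfl⟩ := h
      exact ⟨a i, Finset.mem_union_left _ ((memP _).2 ⟨i, hi, rfl⟩)⟩
  have hA1 : (Finset.univ.filter (fun x => matchedA M x ∧ ¬ matchedA (P ∪ Q) x)).card ≤ 1 := by
    have key : ∀ x, matchedA M x → ¬ matchedA (P ∪ Q) x → (x, b (k - 1)) ∈ M := by
      rintro x ⟨y, hy⟩ hn
      by_cases h : ∀ i < k, y ≠ b i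
      · exact absurd ⟨y, Finset.mem_union_right _ ((memQ _).2 ⟨hy, h⟩)⟩ hn
      · push Not at h
        obtain ⟨i, hi, rfl⟩ := h
        by_cases h1 : i + 1 < k
        · have := uniqB hM hy (hA i h1)
          subst this
          exact absurd ⟨b (i + 1), Finset.mem_union_left _ ((memP _).2 ⟨i + 1, h1, rfl⟩)⟩ hn
        · have : k - 1 = i := by omega
          rw [this]; exact hy
    rw [Finset.card_le_one]
    intro x hx y hy
    have hx := (Finset.mem_filter.1 hx).2
    have hy := (Finset.mem_filter.1 hy).2
    exact uniqB hM (key x hx.1 hx.2) (key y hy.1 hy.2)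
  have h2 : (2 : ℤ) ∣ ∑ i ∈ Finset.range k, wt I M (a i) (b i) :=
    Finset.dvd_sum (fun i _ => wt_even I M _ _)
  rw [hQ0, hB0] at hD
  simp only at hD
  omega

/-! ### Swapping the two sides -/

def swapSys (I : PrefSys A B) : PrefSys B A where
  E := fun b a => I.E a b
  prefA := I.prefB
  prefB := I.prefA

def swapM (M : Finset (A × B)) : Finset (B × A) := M.map (Equiv.prodComm A B).toEmbedding

theorem mem_swapM (M : Finset (A × B)) (a : A) (b : B) : (b, a) ∈ swapM M ↔ (a, b) ∈ M := by
  simp [swapM]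

theorem swapM_swapM (M : Finset (A × B)) : swapM (swapM M) = M := by
  ext ⟨a, b⟩; rw [mem_swapM, mem_swapM]

theorem card_swapM (M : Finset (A × B)) : (swapM M).card = M.card := Finset.card_map _

theorem swap_valid {I : PrefSys A B} (h : I.IsValid) : (swapSys I).IsValid :=
  ⟨h.2.2.2.1, h.2.2.2.2.1, fun a b c h1 h2 h3 => h.2.2.2.2.2 a b c h1 h2 h3,
    h.1, h.2.1, fun a b c h1 h2 h3 => h.2.2.1 a b c h1 h2 h3⟩

theorem swap_matching {I : PrefSys A B} {M : Finset (A × B)} (h : IsMatching I M) :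
    IsMatching (swapSys I) (swapM M) := by
  refine ⟨?_, ?_, ?_⟩
  · rintro ⟨b, a⟩ hp
    exact h.1 _ ((mem_swapM M a b).1 hp)
  · rintro ⟨b, a⟩ hp ⟨b', a'⟩ hq e
    rw [mem_swapM] at hp hq
    simp only at e; subst e
    rw [uniqB h hp hq]
  · rintro ⟨b, a⟩ hp ⟨b', a'⟩ hq e
    rw [mem_swapM] at hp hq
    simp only at e; subst e
    rw [uniqA h hp hq]

theorem swap_maximum {I : PrefSys A B} {M : Finset (A × B)} (h : IsMaximumMatching I M) :
    IsMaximumMatching (swapSys I) (swapM M) := by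
  refine ⟨swap_matching h.1, fun N hN => ?_⟩
  rw [card_swapM, ← card_swapM N]
  exact h.2 _ (swap_matching hN)

theorem swap_matchedA (M : Finset (A × B)) (b : B) : matchedA (swapM M) b ↔ matchedB M b := by
  simp only [matchedA, matchedB, mem_swapM]

theorem swap_matchedB (M : Finset (A × B)) (a : A) : matchedB (swapM M) a ↔ matchedA M a := by
  simp only [matchedA, matchedB, mem_swapM]

theorem swap_phi [Fintype A] [Fintype B] (I : PrefSys A B) (M N : Finset (A × B)) :
    phi (swapSys I) (swapM M) (swapM N) = phi I M N := by
  unfold phi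
  apply Finset.card_equiv (Equiv.sumComm B A)
  intro u
  rw [Finset.mem_filter, Finset.mem_filter]
  rcases u with b | a
  · simp [prefers, prefersA, prefersB, mem_swapM, swap_matchedA, swapSys]
  · simp [prefers, prefersA, prefersB, mem_swapM, swap_matchedB, swapSys]

theorem swap_popular [Fintype A] [Fintype B] {I : PrefSys A B} {M : Finset (A × B)}
    (h : IsPopularMaxMatching I M) : IsPopularMaxMatching (swapSys I) (swapM M) := by
  refine ⟨swap_maximum h.1, fun N hN => ?_⟩
  have := h.2 _ (swap_maximum hN)
  unfold Delta at *
  rw [← swapM_swapM N, swap_phi, swap_phi]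
  exact this

theorem swap_wt (I : PrefSys A B) (M : Finset (A × B)) (a : A) (b : B) :
    wt (swapSys I) (swapM M) b a = wt I M a b := by
  have h : Blocks (swapSys I) (swapM M) b a ↔ Blocks I M a b := by
    simp only [Blocks, mem_swapM, swap_matchedA, swap_matchedB, swapSys]
    tauto
  unfold wt
  simp only [h, mem_swapM]
  simp only [swapSys]
  congr 2
  exact propext and_comm

theorem core_B [Fintype A] [Fintype B] {I : PrefSys A B} (hI : I.IsValid)
    {M : Finset (A × B)} (hpop : IsPopularMaxMatching I M) (k : ℕ) (a : ℕ → A) (b : ℕ → B)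
    (hE : ∀ i < k, I.E (a i) (b i)) (hnM : ∀ i < k, (a i, b i) ∉ M)
    (ha : ∀ i < k, ∀ j < k, a i = a j → i = j) (hb : ∀ i < k, ∀ j < k, b i = b j → i = j)
    (hA : ∀ i, i + 1 < k → (a i, b (i + 1)) ∈ M)
    (h0 : ¬ matchedB M (b 0) ∨ (a (k - 1), b 0) ∈ M) :
    ∑ i ∈ Finset.range k, wt I M (a i) (b i) ≤ 0 := by
  have := core_A (swap_valid hI) (swap_popular hpop) k b a hE
    (by simpa only [mem_swapM] using hnM) hb ha (by simpa only [mem_swapM] using hA)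
    (by simpa only [mem_swapM, swap_matchedA] using h0)
  simpa only [swap_wt] using this


theorem adj_lr (I : PrefSys A B) (a : A) (b : B) :
    (graphOf I).Adj (Sum.inl a) (Sum.inr b) ↔ I.E a b := by
  simp [graphOf]

theorem adj_rl (I : PrefSys A B) (a : A) (b : B) :
    (graphOf I).Adj (Sum.inr b) (Sum.inl a) ↔ I.E a b := by
  simp [graphOf]

theorem adj_ll (I : PrefSys A B) (a a' : A) :
    ¬ (graphOf I).Adj (Sum.inl a) (Sum.inl a') := by
  simp [graphOf]

theorem adj_rr (I : PrefSys A B) (b b' : B) :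
    ¬ (graphOf I).Adj (Sum.inr b) (Sum.inr b') := by
  simp [graphOf]

theorem edgeInM_lr (M : Finset (A × B)) (a : A) (b : B) :
    edgeInM M s(Sum.inl a, Sum.inr b) ↔ (a, b) ∈ M := by
  simp [edgeInM]

theorem edgeInM_rl (M : Finset (A × B)) (a : A) (b : B) :
    edgeInM M s(Sum.inr b, Sum.inl a) ↔ (a, b) ∈ M := by
  rw [Sym2.eq_swap, edgeInM_lr]

theorem wtSym_lr (I : PrefSys A B) (M : Finset (A × B)) (a : A) (b : B) :
    wtSym I M s(Sum.inl a, Sum.inr b) = wt I M a b := rfl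

theorem wtSym_rl (I : PrefSys A B) (M : Finset (A × B)) (a : A) (b : B) :
    wtSym I M s(Sum.inr b, Sum.inl a) = wt I M a b := rfl

theorem wtSym_edgeInM {I : PrefSys A B} (hI : I.IsValid) {M : Finset (A × B)}
    (hM : IsMatching I M) {e : Sym2 (A ⊕ B)} (h : edgeInM M e) : wtSym I M e = 0 := by
  obtain ⟨a, b, hab, rfl⟩ := h
  rw [wtSym_lr, wt_mem hI hM hab]

theorem sum_odd_zero (f : ℕ → ℤ) (n : ℕ) (h : ∀ j < n, j % 2 = 1 → f j = 0) :
    ∑ j ∈ Finset.range n, f j = ∑ i ∈ Finset.range ((n + 1) / 2), f (2 * i) := by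
  induction n with
  | zero => simp
  | succ n ih =>
    rw [Finset.sum_range_succ, ih (fun j hj => h j (by omega))]
    rcases Nat.mod_two_eq_zero_or_one n with h1 | h1
    · rw [show (n + 1 + 1) / 2 = (n + 1) / 2 + 1 by omega, Finset.sum_range_succ,
        show 2 * ((n + 1) / 2) = n by omega]
    · rw [h n (by omega) h1, show (n + 1 + 1) / 2 = (n + 1) / 2 by omega, add_zero]

theorem core_seq [Fintype A] [Fintype B] {I : PrefSys A B} (hI : I.IsValid)
    {M : Finset (A × B)} (hpop : IsPopularMaxMatching I M) (n : ℕ) (v : ℕ → A ⊕ B)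
    (hadj : ∀ j < n, (graphOf I).Adj (v j) (v (j + 1)))
    (hinj : ∀ i ≤ n, ∀ j ≤ n, v i = v j → i = j)
    (halt : ∀ j < n, (edgeInM M s(v j, v (j + 1)) ↔ j % 2 = 1))
    (h0 : unmatchedNode M (v 0) ∨ (n % 2 = 1 ∧ edgeInM M s(v n, v 0))) :
    ∑ j ∈ Finset.range n, wtSym I M s(v j, v (j + 1)) ≤ 0 := by
  rcases Nat.eq_zero_or_pos n with hn | hn
  · subst hn; simp
  rw [sum_odd_zero _ n (fun j hj h1 => wtSym_edgeInM hI hpop.1.1 ((halt j hj).2 h1))]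
  rcases hv0 : v 0 with a0 | b0
  · have par : ∀ j ≤ n, (j % 2 = 0 → ∃ a, v j = Sum.inl a) ∧ (j % 2 = 1 → ∃ b, v j = Sum.inr b) := by
      intro j
      induction j with
      | zero => intro _; exact ⟨fun _ => ⟨a0, hv0⟩, by omega⟩
      | succ j ih =>
        intro hj
        obtain ⟨i1, i2⟩ := ih (by omega)
        have had := hadj j (by omega)
        constructor
        · intro hp
          obtain ⟨b, hb⟩ := i2 (by omega)
          rcases hw : v (j + 1) with x | y
          · exact ⟨x, rfl⟩
          · rw [hb, hw] at had; exact absurd had (adj_rr _ _ _)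
        · intro hp
          obtain ⟨b, hb⟩ := i1 (by omega)
          rcases hw : v (j + 1) with x | y
          · rw [hb, hw] at had; exact absurd had (adj_ll _ _ _)
          · exact ⟨y, rfl⟩
    have ea : ∀ i, ∃ a, 2 * i ≤ n → v (2 * i) = Sum.inl a := by
      intro i
      by_cases h : 2 * i ≤ n
      · obtain ⟨a, ha⟩ := (par _ h).1 (by omega)
        exact ⟨a, fun _ => ha⟩
      · exact ⟨a0, fun h' => absurd h' h⟩
    obtain ⟨b0, hb0⟩ := (par 1 hn).2 rfl
    have eb : ∀ i, ∃ b, 2 * i + 1 ≤ n → v (2 * i + 1) = Sum.inr b := by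
      intro i
      by_cases h : 2 * i + 1 ≤ n
      · obtain ⟨a, ha⟩ := (par _ h).2 (by omega)
        exact ⟨a, fun _ => ha⟩
      · exact ⟨b0, fun h' => absurd h' h⟩
    choose a ha using ea
    choose b hb using eb
    have hsum : ∑ i ∈ Finset.range ((n + 1) / 2), wtSym I M s(v (2 * i), v (2 * i + 1)) =
        ∑ i ∈ Finset.range ((n + 1) / 2), wt I M (a i) (b i) := by
      apply Finset.sum_congr rfl
      intro i hi
      have hi := Finset.mem_range.1 hi
      rw [ha i (by omega), hb i (by omega), wtSym_lr]
    rw [hsum]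
    apply core_A hI hpop
    · intro i hi
      have := hadj (2 * i) (by omega)
      rwa [ha i (by omega), hb i (by omega), adj_lr] at this
    · intro i hi
      have := halt (2 * i) (by omega)
      rw [ha i (by omega), hb i (by omega), edgeInM_lr] at this
      rw [this]; omega
    · intro i hi j hj hij
      have := hinj (2 * i) (by omega) (2 * j) (by omega)
        (by rw [ha i (by omega), ha j (by omega), hij])
      omega
    · intro i hi j hj hij
      have := hinj (2 * i + 1) (by omega) (2 * j + 1) (by omega)
        (by rw [hb i (by omega), hb j (by omega), hij])
      omega
    · intro i hi
      have := halt (2 * i + 1) (by omega)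
      rw [hb i (by omega), show 2 * i + 1 + 1 = 2 * (i + 1) by omega, ha (i + 1) (by omega),
        edgeInM_rl] at this
      rw [this]; omega
    · have hz := ha 0 (by omega)
      rw [Nat.mul_zero] at hz
      rcases h0 with h0 | ⟨h1, h2⟩
      · left; rw [hz] at h0; exact h0
      · right
        have h3 := hb ((n + 1) / 2 - 1) (by omega)
        rw [show 2 * ((n + 1) / 2 - 1) + 1 = n by omega] at h3
        rwa [hz, h3, edgeInM_rl] at h2
  · have par : ∀ j ≤ n, (j % 2 = 0 → ∃ a, v j = Sum.inr a) ∧ (j % 2 = 1 → ∃ b, v j = Sum.inl b) := by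
      intro j
      induction j with
      | zero => intro _; exact ⟨fun _ => ⟨b0, hv0⟩, by omega⟩
      | succ j ih =>
        intro hj
        obtain ⟨i1, i2⟩ := ih (by omega)
        have had := hadj j (by omega)
        constructor
        · intro hp
          obtain ⟨b, hb⟩ := i2 (by omega)
          rcases hw : v (j + 1) with x | y
          · rw [hb, hw] at had; exact absurd had (adj_ll _ _ _)
          · exact ⟨y, rfl⟩
        · intro hp
          obtain ⟨b, hb⟩ := i1 (by omega)
          rcases hw : v (j + 1) with x | y
          · exact ⟨x, rfl⟩
          · rw [hb, hw] at had; exact absurd had (adj_rr _ _ _)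
    have eb : ∀ i, ∃ b, 2 * i ≤ n → v (2 * i) = Sum.inr b := by
      intro i
      by_cases h : 2 * i ≤ n
      · obtain ⟨a, ha⟩ := (par _ h).1 (by omega)
        exact ⟨a, fun _ => ha⟩
      · exact ⟨b0, fun h' => absurd h' h⟩
    obtain ⟨a0, ha0⟩ := (par 1 hn).2 rfl
    have ea : ∀ i, ∃ a, 2 * i + 1 ≤ n → v (2 * i + 1) = Sum.inl a := by
      intro i
      by_cases h : 2 * i + 1 ≤ n
      · obtain ⟨a, ha⟩ := (par _ h).2 (by omega)
        exact ⟨a, fun _ => ha⟩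
      · exact ⟨a0, fun h' => absurd h' h⟩
    choose a ha using ea
    choose b hb using eb
    have hsum : ∑ i ∈ Finset.range ((n + 1) / 2), wtSym I M s(v (2 * i), v (2 * i + 1)) =
        ∑ i ∈ Finset.range ((n + 1) / 2), wt I M (a i) (b i) := by
      apply Finset.sum_congr rfl
      intro i hi
      have hi := Finset.mem_range.1 hi
      rw [ha i (by omega), hb i (by omega), wtSym_rl]
    rw [hsum]
    apply core_B hI hpop
    · intro i hi
      have := hadj (2 * i) (by omega)
      rwa [ha i (by omega), hb i (by omega), adj_rl] at this
    · intro i hi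
      have := halt (2 * i) (by omega)
      rw [ha i (by omega), hb i (by omega), edgeInM_rl] at this
      rw [this]; omega
    · intro i hi j hj hij
      have := hinj (2 * i + 1) (by omega) (2 * j + 1) (by omega)
        (by rw [ha i (by omega), ha j (by omega), hij])
      omega
    · intro i hi j hj hij
      have := hinj (2 * i) (by omega) (2 * j) (by omega)
        (by rw [hb i (by omega), hb j (by omega), hij])
      omega
    · intro i hi
      have := halt (2 * i + 1) (by omega)
      rw [ha i (by omega), show 2 * i + 1 + 1 = 2 * (i + 1) by omega, hb (i + 1) (by omega),
        edgeInM_lr] at this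
      rw [this]; omega
    · have hz := hb 0 (by omega)
      rw [Nat.mul_zero] at hz
      rcases h0 with h0 | ⟨h1, h2⟩
      · left; rw [hz] at h0; exact h0
      · right
        have h3 := ha ((n + 1) / 2 - 1) (by omega)
        rw [show 2 * ((n + 1) / 2 - 1) + 1 = n by omega] at h3
        rwa [hz, h3, edgeInM_lr] at h2


theorem edges_eq_map {V : Type*} {G : SimpleGraph V} {u w : V} (p : G.Walk u w) :
    p.edges = (List.range p.length).map (fun i => s(p.getVert i, p.getVert (i + 1))) := by
  induction p with
  | nil => simp
  | cons h p ih =>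
    rw [SimpleGraph.Walk.edges_cons, SimpleGraph.Walk.length_cons, List.range_succ_eq_map, List.map_cons,
      List.map_map, ih]
    simp [Function.comp_def]

theorem chain_map_range {α : Type*} (R : α → α → Prop) (f : ℕ → α) (n : ℕ) :
    List.IsChain R ((List.range n).map f) ↔ ∀ i, i + 1 < n → R (f i) (f (i + 1)) := by
  rw [List.isChain_iff_getElem]
  simp

theorem wtWalk_eq (I : PrefSys A B) (M : Finset (A × B)) {u w : A ⊕ B}
    (p : (graphOf I).Walk u w) :
    wtWalk I M p = ∑ i ∈ Finset.range p.length, wtSym I M s(p.getVert i, p.getVert (i + 1)) := by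
  unfold wtWalk
  rw [edges_eq_map, List.map_map, Finset.sum_range, ← List.sum_ofFn, List.ofFn_eq_map, ← List.map_coe_finRange_eq_range,
    List.map_map]
  rfl

theorem not_edgeInM_of_unmatched {M : Finset (A × B)} {u x : A ⊕ B} (h : unmatchedNode M u) :
    ¬ edgeInM M s(u, x) := by
  rintro ⟨a, b, hab, he⟩
  rw [Sym2.eq_iff] at he
  rcases he with ⟨rfl, rfl⟩ | ⟨rfl, rfl⟩
  · exact h ⟨b, hab⟩
  · exact h ⟨a, hab⟩

theorem forward_path [Fintype A] [Fintype B] {I : PrefSys A B} (hI : I.IsValid)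
    {M : Finset (A × B)} (hpop : IsPopularMaxMatching I M) {u w : A ⊕ B}
    (p : (graphOf I).Walk u w) (hp : IsAltPath I M p) (hu : unmatchedNode M u) :
    wtWalk I M p ≤ 0 := by
  obtain ⟨hpath, hch⟩ := hp
  change List.IsChain _ _ at hch
  rw [edges_eq_map, chain_map_range] at hch
  rw [wtWalk_eq]
  apply core_seq hI hpop
  · intro j hj; exact p.adj_getVert_succ hj
  · intro i hi j hj hij
    exact hpath.getVert_injOn hi hj hij
  · intro j
    induction j with
    | zero =>
      intro _
      have := not_edgeInM_of_unmatched (x := p.getVert 1) hu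
      simp [this]
    | succ j ih =>
      intro hj
      have h1 := ih (by omega)
      have h2 := hch j hj
      unfold altRel at h2
      rw [h1] at h2
      constructor
      · intro h3
        by_contra h4
        exact h2.1 (by omega) h3
      · intro h3
        by_contra h4
        have := h2.2 h4
        omega
  · left; rw [p.getVert_zero]; exact hu

theorem forward_path_rev [Fintype A] [Fintype B] {I : PrefSys A B} (hI : I.IsValid)
    {M : Finset (A × B)} (hpop : IsPopularMaxMatching I M) {u w : A ⊕ B}
    (p : (graphOf I).Walk u w) (hp : IsAltPath I M p) (hu : unmatchedNode M w) :
    wtWalk I M p ≤ 0 := by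
  have h1 : wtWalk I M p = wtWalk I M p.reverse := by
    unfold wtWalk
    rw [SimpleGraph.Walk.edges_reverse, List.map_reverse, List.sum_reverse]
  rw [h1]
  apply forward_path hI hpop p.reverse _ hu
  refine ⟨hp.1.reverse, ?_⟩
  change List.IsChain _ _
  rw [SimpleGraph.Walk.edges_reverse, List.isChain_reverse]
  have h2 : List.IsChain (altRel M) p.edges := hp.2
  refine h2.imp ?_
  intro e f hef
  unfold altRel at *
  tauto

theorem forward_cycle [Fintype A] [Fintype B] {I : PrefSys A B} (hI : I.IsValid)
    {M : Finset (A × B)} (hpop : IsPopularMaxMatching I M) {u : A ⊕ B}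
    (c : (graphOf I).Walk u u) (hc : IsAltCycle I M c) : wtWalk I M c ≤ 0 := by
  obtain ⟨hcyc, hch⟩ := hc
  change List.IsChain _ _ at hch
  have h3 := hcyc.three_le_length
  rw [wtWalk_eq]
  rw [edges_eq_map] at hch
  have hi1 := hcyc.getVert_injOn
  have hi2 := hcyc.getVert_injOn'
  have hadj : ∀ j < c.length, (graphOf I).Adj (c.getVert j) (c.getVert (j + 1)) :=
    fun j hj => c.adj_getVert_succ hj
  have hv0 := c.getVert_zero
  have hvn := c.getVert_length
  generalize c.getVert = v at *
  obtain ⟨m, hm⟩ : ∃ m, c.length = m + 1 := ⟨c.length - 1, by omega⟩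
  rw [hm] at h3 hch hi1 hi2 hadj hvn ⊢
  obtain ⟨c1, -, c2⟩ := List.isChain_append.1 hch
  rw [chain_map_range] at c1
  have c3 : altRel M s(v m, v (m + 1)) s(v 0, v 1) := by
    apply c2
    · rw [List.range_succ]; simp
    · rw [List.range_succ_eq_map]; simp
  by_cases h0 : edgeInM M s(v 0, v 1)
  · have halt : ∀ j < m + 1, (edgeInM M s(v j, v (j + 1)) ↔ j % 2 = 0) := by
      intro j
      induction j with
      | zero => intro _; simp [h0]
      | succ j ih =>
        intro hj
        have h1 := ih (by omega)
        have h2 := c1 j hj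
        unfold altRel at h2
        rw [h1] at h2
        constructor
        · intro h3
          by_contra h4
          exact h2.1 (by omega) h3
        · intro h3
          by_contra h4
          have := h2.2 h4
          omega
    have hmo : m % 2 = 1 := by
      by_contra h
      exact c3.1 ((halt m (by omega)).2 (by omega)) h0
    rw [Finset.sum_range_succ', wtSym_edgeInM hI hpop.1.1 h0, add_zero]
    apply core_seq hI hpop m (fun j => v (j + 1))
    · intro j hj; exact hadj (j + 1) (by omega)
    · intro i hi j hj hij
      have := hi1 (show i + 1 ∈ {i | 1 ≤ i ∧ i ≤ m + 1} from ⟨by omega, by omega⟩)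
        (show j + 1 ∈ {i | 1 ≤ i ∧ i ≤ m + 1} from ⟨by omega, by omega⟩) hij
      omega
    · intro j hj
      rw [halt (j + 1) (by omega)]; omega
    · right
      refine ⟨hmo, ?_⟩
      simp only [hvn, ← hv0]
      exact h0
  · have halt : ∀ j < m + 1, (edgeInM M s(v j, v (j + 1)) ↔ j % 2 = 1) := by
      intro j
      induction j with
      | zero => intro _; simp [h0]
      | succ j ih =>
        intro hj
        have h1 := ih (by omega)
        have h2 := c1 j hj
        unfold altRel at h2
        rw [h1] at h2
        constructor
        · intro h3
          by_contra h4
          exact h2.1 (by omega) h3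
        · intro h3
          by_contra h4
          have := h2.2 h4
          omega
    have hme : edgeInM M s(v m, v (m + 1)) := c3.2 h0
    have hmo : m % 2 = 1 := (halt m (by omega)).1 hme
    rw [Finset.sum_range_succ, wtSym_edgeInM hI hpop.1.1 hme, add_zero]
    apply core_seq hI hpop m v
    · intro j hj; exact hadj j (by omega)
    · intro i hi j hj hij
      exact hi2 (by simp; omega) (by simp; omega) hij
    · intro j hj
      rw [halt j (by omega)]
    · right
      refine ⟨hmo, ?_⟩
      rw [hv0, ← hvn]
      exact hme


theorem chain_max {α : Type*} [Fintype α] (R : α → α → Prop)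
    (hf : ∀ x y z, R x y → R x z → y = z) (hi : ∀ x y z, R x z → R y z → x = y)
    (x0 : α) (S : Finset α) (hx0 : x0 ∈ S) (hS : ∀ x y, R x y → (x ∈ S ↔ y ∈ S)) :
    ∃ (k : ℕ) (a : ℕ → α), 0 < k ∧ (∀ i < k, a i ∈ S) ∧
      (∀ i < k, ∀ j < k, a i = a j → i = j) ∧ (∀ i, i + 1 < k → R (a i) (a (i + 1))) ∧
      (R (a (k - 1)) (a 0) ∨ ((∀ z, ¬ R z (a 0)) ∧ ∀ z, ¬ R (a (k - 1)) z)) := by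
  let P : ℕ → Prop := fun k => ∃ a : ℕ → α, (∀ i < k, a i ∈ S) ∧
      (∀ i < k, ∀ j < k, a i = a j → i = j) ∧ (∀ i, i + 1 < k → R (a i) (a (i + 1)))
  have hbound : ∀ k, P k → k ≤ Fintype.card α := by
    rintro k ⟨a, -, h, -⟩
    have : Function.Injective (fun i : Fin k => a i) := by
      intro i j hij
      exact Fin.ext (h i i.2 j j.2 hij)
    simpa using Fintype.card_le_of_injective _ this
  have h1 : P 1 := ⟨fun _ => x0, fun _ _ => hx0, by intros; omega, by intros; omega⟩
  have hK1 : 1 ≤ Nat.findGreatest P (Fintype.card α) := Nat.le_findGreatest (hbound 1 h1) h1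
  have hK : P (Nat.findGreatest P (Fintype.card α)) := Nat.findGreatest_spec (hbound 1 h1) h1
  have hmax : ∀ k, P k → k ≤ Nat.findGreatest P (Fintype.card α) :=
    fun k hk => Nat.le_findGreatest (hbound k hk) hk
  generalize Nat.findGreatest P (Fintype.card α) = K at *
  obtain ⟨a, hS', hinj, hch⟩ := hK
  refine ⟨K, a, hK1, hS', hinj, hch, ?_⟩
  have back : ∀ y, R (a (K - 1)) y → ∃ j < K, y = a j := by
    intro y hy
    by_contra hn
    push Not at hn
    have : P (K + 1) := by
      refine ⟨fun i => if i < K then a i else y, ?_, ?_, ?_⟩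
      · intro i hi'
        by_cases h : i < K
        · simp only [h, if_true]; exact hS' i h
        · simp only [h, if_false]; exact (hS _ _ hy).1 (hS' _ (by omega))
      · intro i hi' j hj hij
        by_cases h : i < K <;> by_cases h' : j < K <;> simp only [h, h', if_true, if_false] at hij
        · exact hinj i h j h' hij
        · exact absurd hij.symm (hn i h)
        · exact absurd hij (hn j h')
        · omega
      · intro i hi'
        have h : i < K := by omega
        by_cases h' : i + 1 < K
        · simp only [h, h', if_true]; exact hch i h'
        · simp only [h, h', if_true, if_false]
          rwa [show i = K - 1 by omega]
    have := hmax _ this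
    omega
  have front : ∀ y, R y (a 0) → ∃ j < K, y = a j := by
    intro y hy
    by_contra hn
    push Not at hn
    have : P (K + 1) := by
      refine ⟨fun i => if i = 0 then y else a (i - 1), ?_, ?_, ?_⟩
      · intro i hi'
        by_cases h : i = 0
        · simp only [h, if_true]; exact (hS _ _ hy).2 (hS' _ (by omega))
        · simp only [h, if_false]; exact hS' _ (by omega)
      · intro i hi' j hj hij
        by_cases h : i = 0 <;> by_cases h' : j = 0 <;> simp only [h, h', if_true, if_false] at hij
        · omega
        · exact absurd hij (hn _ (by omega))
        · exact absurd hij.symm (hn _ (by omega))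
        · have := hinj _ (by omega) _ (by omega) hij
          omega
      · intro i hi'
        by_cases h : i = 0
        · subst h; simpa using hy
        · simp only [h, if_false, Nat.add_eq_zero_iff, false_and]
          have := hch (i - 1) (by omega)
          rwa [show i - 1 + 1 = i + 1 - 1 by omega] at this
    have := hmax _ this
    omega
  by_cases hs : ∃ y, R (a (K - 1)) y
  · obtain ⟨y, hy⟩ := hs
    obtain ⟨j, hj, rfl⟩ := back y hy
    left
    rcases j with _ | j
    · exact hy
    · have h2 := hi _ _ _ hy (hch j hj)
      have := hinj _ (by omega) _ (by omega) h2
      omega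
  · push Not at hs
    right
    refine ⟨?_, hs⟩
    intro z hz
    obtain ⟨j, hj, rfl⟩ := front z hz
    by_cases h : j + 1 < K
    · have h2 := hf _ _ _ hz (hch j h)
      have := hinj _ (by omega) _ (by omega) h2
      omega
    · rw [show j = K - 1 by omega] at hz
      exact hs _ hz

/-- the image of a maximal chain is closed under the relation -/
theorem chain_closed {α : Type*} (R : α → α → Prop)
    (hf : ∀ x y z, R x y → R x z → y = z) (hi : ∀ x y z, R x z → R y z → x = y)
    (k : ℕ) (a : ℕ → α) (hk : 0 < k) (hch : ∀ i, i + 1 < k → R (a i) (a (i + 1)))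
    (hend : R (a (k - 1)) (a 0) ∨ ((∀ z, ¬ R z (a 0)) ∧ ∀ z, ¬ R (a (k - 1)) z)) :
    ∀ x y, R x y → (x ∈ (Finset.range k).image a ↔ y ∈ (Finset.range k).image a) := by
  intro x y hxy
  simp only [Finset.mem_image, Finset.mem_range]
  constructor
  · rintro ⟨i, hik, rfl⟩
    by_cases h : i + 1 < k
    · exact ⟨i + 1, h, hf _ _ _ (hch i h) hxy⟩
    · have : i = k - 1 := by omega
      subst this
      rcases hend with he | ⟨-, he⟩
      · exact ⟨0, hk, hf _ _ _ he hxy⟩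
      · exact absurd hxy (he _)
  · rintro ⟨i, hik, rfl⟩
    rcases i with _ | i
    · rcases hend with he | ⟨he, -⟩
      · exact ⟨k - 1, by omega, hi _ _ _ he hxy⟩
      · exact absurd hxy (he _)
    · exact ⟨i, by omega, hi _ _ _ (hch i hik) hxy⟩

theorem chain_decomp {α : Type*} [Fintype α] (R : α → α → Prop)
    (hf : ∀ x y z, R x y → R x z → y = z) (hi : ∀ x y z, R x z → R y z → x = y) (w : α → ℤ) :
    ∀ (n : ℕ) (S : Finset α), S.card ≤ n → (∀ x y, R x y → (x ∈ S ↔ y ∈ S)) → 0 < ∑ x ∈ S, w x →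
    ∃ (k : ℕ) (a : ℕ → α), 0 < k ∧
      (∀ i < k, ∀ j < k, a i = a j → i = j) ∧ (∀ i, i + 1 < k → R (a i) (a (i + 1))) ∧
      (R (a (k - 1)) (a 0) ∨ ((∀ z, ¬ R z (a 0)) ∧ ∀ z, ¬ R (a (k - 1)) z)) ∧
      0 < ∑ i ∈ Finset.range k, w (a i) := by
  intro n
  induction n with
  | zero =>
    intro S hc hS hw
    have : S = ∅ := Finset.card_eq_zero.1 (by omega)
    subst this; simp at hw
  | succ n ih =>
    intro S hc hS hw
    have hne : S.Nonempty := by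
      by_contra h
      rw [Finset.not_nonempty_iff_eq_empty] at h
      subst h; simp at hw
    obtain ⟨x0, hx0⟩ := hne
    obtain ⟨k, a, hk, haS, hinj, hch, hend⟩ := chain_max R hf hi x0 S hx0 hS
    have hinj' : Set.InjOn a (Finset.range k : Set ℕ) := by
      intro i hi' j hj hij
      simp only [Finset.coe_range, Set.mem_Iio] at hi' hj
      exact hinj i hi' j hj hij
    by_cases hp : 0 < ∑ i ∈ Finset.range k, w (a i)
    · exact ⟨k, a, hk, hinj, hch, hend, hp⟩
    · set T := (Finset.range k).image a with hT
      have hTS : T ⊆ S := by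
        intro x hx
        obtain ⟨i, hi', rfl⟩ := Finset.mem_image.1 hx
        exact haS i (Finset.mem_range.1 hi')
      have hTcl := chain_closed R hf hi k a hk hch hend
      have ha0 : a 0 ∈ T := Finset.mem_image.2 ⟨0, Finset.mem_range.2 hk, rfl⟩
      apply ih (S \ T)
      · have h1 := Finset.card_sdiff_add_card_eq_card hTS
        have h2 : 0 < T.card := Finset.card_pos.2 ⟨_, ha0⟩
        omega
      · intro x y hxy
        rw [Finset.mem_sdiff, Finset.mem_sdiff, hS x y hxy, hTcl x y hxy]
      · have h1 := Finset.sum_sdiff (f := w) hTS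
        have h2 : ∑ x ∈ T, w x = ∑ i ∈ Finset.range k, w (a i) := Finset.sum_image hinj'
        omega


theorem walk_build {V : Type*} (G : SimpleGraph V) (v : ℕ → V) (n : ℕ)
    (h : ∀ i < n, G.Adj (v i) (v (i + 1))) :
    ∃ p : G.Walk (v 0) (v n), p.edges = (List.range n).map (fun i => s(v i, v (i + 1))) ∧
      p.support = (List.range (n + 1)).map v := by
  induction n with
  | zero => exact ⟨SimpleGraph.Walk.nil, by simp, by simp⟩
  | succ n ih =>
    obtain ⟨p, h1, h2⟩ := ih (fun i hi => h i (by omega))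
    refine ⟨p.concat (h n (by omega)), ?_, ?_⟩
    · rw [SimpleGraph.Walk.edges_concat, h1, List.range_succ, List.map_append]
      simp
    · rw [SimpleGraph.Walk.support_concat, h2, List.range_succ (n := n + 1), List.map_append]
      simp

def seqv (a : ℕ → A) (b : ℕ → B) (j : ℕ) : A ⊕ B :=
  if j % 2 = 0 then Sum.inl (a (j / 2)) else Sum.inr (b (j / 2))

theorem seqv_even (a : ℕ → A) (b : ℕ → B) (i : ℕ) : seqv a b (2 * i) = Sum.inl (a i) := by
  unfold seqv
  rw [if_pos (by omega), show 2 * i / 2 = i by omega]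

theorem seqv_odd (a : ℕ → A) (b : ℕ → B) (i : ℕ) : seqv a b (2 * i + 1) = Sum.inr (b i) := by
  unfold seqv
  rw [if_neg (by omega), show (2 * i + 1) / 2 = i by omega]

theorem key_path {I : PrefSys A B} (hI : I.IsValid) {M : Finset (A × B)} (hM : IsMatching I M)
    (a : ℕ → A) (b : ℕ → B) (n : ℕ)
    (hE : ∀ i, 2 * i < n → I.E (a i) (b i) ∧ (a i, b i) ∉ M)
    (hm : ∀ i, 2 * i + 1 < n → (a (i + 1), b i) ∈ M)
    (ha : ∀ i j, 2 * i ≤ n → 2 * j ≤ n → a i = a j → i = j)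
    (hb : ∀ i j, 2 * i + 1 ≤ n → 2 * j + 1 ≤ n → b i = b j → i = j) :
    ∃ p : (graphOf I).Walk (seqv a b 0) (seqv a b n), p.IsPath ∧
      p.edges = (List.range n).map (fun i => s(seqv a b i, seqv a b (i + 1))) ∧
      (∀ j < n, (edgeInM M s(seqv a b j, seqv a b (j + 1)) ↔ j % 2 = 1)) ∧
      wtWalk I M p = ∑ i ∈ Finset.range ((n + 1) / 2), wt I M (a i) (b i) := by
  have hadj : ∀ i < n, (graphOf I).Adj (seqv a b i) (seqv a b (i + 1)) := by
    intro j hj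
    obtain ⟨i, rfl | rfl⟩ := Nat.even_or_odd' j
    · rw [seqv_even, seqv_odd, adj_lr]; exact (hE i hj).1
    · rw [show 2 * i + 1 + 1 = 2 * (i + 1) by omega, seqv_even, seqv_odd, adj_rl]
      exact hM.1 _ (hm i hj)
  have halt : ∀ j < n, (edgeInM M s(seqv a b j, seqv a b (j + 1)) ↔ j % 2 = 1) := by
    intro j hj
    obtain ⟨i, rfl | rfl⟩ := Nat.even_or_odd' j
    · rw [seqv_even, seqv_odd, edgeInM_lr]
      simp [(hE i hj).2]
    · rw [show 2 * i + 1 + 1 = 2 * (i + 1) by omega, seqv_even, seqv_odd, edgeInM_rl]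
      simp only [hm i hj, true_iff]; omega
  obtain ⟨p, h1, h2⟩ := walk_build (graphOf I) (seqv a b) n hadj
  refine ⟨p, ?_, h1, halt, ?_⟩
  · rw [SimpleGraph.Walk.isPath_def, h2]
    apply List.Nodup.map_on _ List.nodup_range
    intro x hx y hy hxy
    rw [List.mem_range] at hx hy
    obtain ⟨i, rfl | rfl⟩ := Nat.even_or_odd' x <;> obtain ⟨j, rfl | rfl⟩ := Nat.even_or_odd' y
    · rw [seqv_even, seqv_even, Sum.inl.injEq] at hxy
      rw [ha i j (by omega) (by omega) hxy]
    · rw [seqv_even, seqv_odd] at hxy; cases hxy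
    · rw [seqv_even, seqv_odd] at hxy; cases hxy
    · rw [seqv_odd, seqv_odd, Sum.inr.injEq] at hxy
      rw [hb i j (by omega) (by omega) hxy]
  · have : wtWalk I M p = ∑ i ∈ Finset.range n, wtSym I M s(seqv a b i, seqv a b (i + 1)) := by
      unfold wtWalk
      rw [h1, List.map_map, Finset.sum_range, ← List.sum_ofFn, List.ofFn_eq_map,
        ← List.map_coe_finRange_eq_range, List.map_map]
      rfl
    rw [this, sum_odd_zero _ n (fun j hj h1 => wtSym_edgeInM hI hM ((halt j hj).2 h1))]
    apply Finset.sum_congr rfl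
    intro i _
    rw [seqv_even, seqv_odd, wtSym_lr]

theorem key_alt {I : PrefSys A B} {M : Finset (A × B)} {n : ℕ} {v : ℕ → A ⊕ B}
    (halt : ∀ j < n, (edgeInM M s(v j, v (j + 1)) ↔ j % 2 = 1)) :
    List.IsChain (altRel M) ((List.range n).map (fun i => s(v i, v (i + 1)))) := by
  rw [chain_map_range]
  intro i hi
  unfold altRel
  rw [halt i (by omega), halt (i + 1) (by omega)]
  omega

theorem no_path {I : PrefSys A B} (hI : I.IsValid) {M : Finset (A × B)} (hM : IsMatching I M)
    (h2 : ∀ (u v : A ⊕ B) (p : (graphOf I).Walk u v),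
          IsAltPath I M p → (unmatchedNode M u ∨ unmatchedNode M v) → ¬ 0 < wtWalk I M p)
    (a : ℕ → A) (b : ℕ → B) (n : ℕ)
    (hE : ∀ i, 2 * i < n → I.E (a i) (b i) ∧ (a i, b i) ∉ M)
    (hm : ∀ i, 2 * i + 1 < n → (a (i + 1), b i) ∈ M)
    (ha : ∀ i j, 2 * i ≤ n → 2 * j ≤ n → a i = a j → i = j)
    (hb : ∀ i j, 2 * i + 1 ≤ n → 2 * j + 1 ≤ n → b i = b j → i = j)
    (hu : unmatchedNode M (seqv a b 0) ∨ unmatchedNode M (seqv a b n)) :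
    ¬ 0 < ∑ i ∈ Finset.range ((n + 1) / 2), wt I M (a i) (b i) := by
  obtain ⟨p, hp, he, halt, hw⟩ := key_path hI hM a b n hE hm ha hb
  rw [← hw]
  apply h2 _ _ p ⟨hp, ?_⟩ hu
  change List.IsChain _ _
  rw [he]
  exact key_alt (I := I) halt

theorem no_cycle {I : PrefSys A B} (hI : I.IsValid) {M : Finset (A × B)} (hM : IsMatching I M)
    (h2 : ∀ (v : A ⊕ B) (C : (graphOf I).Walk v v), IsAltCycle I M C → ¬ 0 < wtWalk I M C)
    (a : ℕ → A) (b : ℕ → B) (m : ℕ) (h0 : 0 < m)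
    (hE : ∀ i, i ≤ m → I.E (a i) (b i) ∧ (a i, b i) ∉ M)
    (hm : ∀ i, i < m → (a (i + 1), b i) ∈ M)
    (ha : ∀ i j, i ≤ m → j ≤ m → a i = a j → i = j)
    (hb : ∀ i j, i ≤ m → j ≤ m → b i = b j → i = j)
    (hu : (a 0, b m) ∈ M) :
    ¬ 0 < ∑ i ∈ Finset.range (m + 1), wt I M (a i) (b i) := by
  obtain ⟨p, hp, he, halt, hw⟩ := key_path hI hM a b (2 * m + 1) (fun i hi => hE i (by omega))
    (fun i hi => hm i (by omega)) (fun i j hi hj => ha i j (by omega) (by omega))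
    (fun i j hi hj => hb i j (by omega) (by omega))
  rw [show (2 * m + 1 + 1) / 2 = m + 1 by omega] at hw
  have hv0 : seqv a b 0 = Sum.inl (a 0) := seqv_even a b 0
  have hvn := seqv_odd a b m
  have had : (graphOf I).Adj (seqv a b (2 * m + 1)) (seqv a b 0) := by
    rw [hv0, hvn, adj_rl]; exact hM.1 _ hu
  have hin : edgeInM M s(seqv a b (2 * m + 1), seqv a b 0) := by
    rw [hv0, hvn, edgeInM_rl]; exact hu
  have hws : wtWalk I M (SimpleGraph.Walk.cons had p) = wtWalk I M p := by
    unfold wtWalk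
    rw [SimpleGraph.Walk.edges_cons, List.map_cons, List.sum_cons, wtSym_edgeInM hI hM hin, zero_add]
  rw [← hw, ← hws]
  have hlast : ¬ edgeInM M s(seqv a b (2 * m), seqv a b (2 * m + 1)) := by
    rw [halt (2 * m) (by omega)]; omega
  have hfirst : ¬ edgeInM M s(seqv a b 0, seqv a b (0 + 1)) := by
    rw [halt 0 (by omega)]; omega
  apply h2 _ _ ⟨?_, ?_⟩
  · rw [SimpleGraph.Walk.cons_isCycle_iff]
    refine ⟨hp, ?_⟩
    rw [he]
    intro hmem
    obtain ⟨j, hj, hje⟩ := List.mem_map.1 hmem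
    rw [List.mem_range] at hj
    rw [← hje, halt j hj] at hin
    obtain ⟨i, rfl | rfl⟩ := Nat.even_or_odd' j
    · omega
    · rw [show 2 * i + 1 + 1 = 2 * (i + 1) by omega, seqv_even, seqv_odd, hv0, hvn] at hje
      simp only [Sym2.eq_iff, Sum.inr.injEq, Sum.inl.injEq, reduceCtorEq, false_and, or_false] at hje
      have := ha _ _ (by omega) (by omega) hje.2
      omega
  · change List.IsChain _ _
    rw [SimpleGraph.Walk.edges_cons, List.take_succ_cons, List.take_zero, he, List.isChain_append]
    refine ⟨?_, by simp, ?_⟩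
    · rw [List.isChain_cons]
      refine ⟨?_, key_alt (I := I) halt⟩
      intro y hy
      rw [List.range_succ_eq_map] at hy
      simp only [List.map_cons, List.head?_cons, Option.mem_def, Option.some.injEq] at hy
      subst hy
      unfold altRel
      tauto
    · intro x hx y hy
      rw [List.range_succ, List.map_append, ← List.cons_append] at hx
      simp only [List.map_cons, List.map_nil, List.getLast?_append, List.getLast?_singleton,
        Option.some_or, List.head?_cons, Option.mem_def, Option.some.injEq] at hx hy
      subst hx; subst hy
      unfold altRel
      tauto

theorem improve {I : PrefSys A B} {M N : Finset (A × B)} (hM : IsMatching I M)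
    (hN : IsMaximumMatching I N) (T : Finset A)
    (hT : ∀ x y, (∃ b, (x, b) ∈ N ∧ (y, b) ∈ M) → (x ∈ T ↔ y ∈ T))
    (hall : ∀ x ∈ T, matchedA M x) (x0 : A) (hx0 : x0 ∈ T) (hn : ¬ matchedA N x0) : False := by
  have hN' : IsMatching I (N.filter (fun e => e.1 ∉ T) ∪ M.filter (fun e => e.1 ∈ T)) := by
    refine ⟨?_, ?_, ?_⟩
    · intro p hp
      rw [Finset.mem_union, Finset.mem_filter, Finset.mem_filter] at hp
      rcases hp with hp | hp
      · exact hN.1.1 _ hp.1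
      · exact hM.1 _ hp.1
    · intro p hp q hq hpq
      rw [Finset.mem_union, Finset.mem_filter, Finset.mem_filter] at hp hq
      rcases hp with hp | hp <;> rcases hq with hq | hq
      · exact hN.1.2.1 _ hp.1 _ hq.1 hpq
      · rw [hpq] at hp; exact absurd hq.2 hp.2
      · rw [hpq] at hp; exact absurd hp.2 hq.2
      · exact hM.2.1 _ hp.1 _ hq.1 hpq
    · rintro ⟨a, b⟩ hp ⟨a', b'⟩ hq hpq
      rw [Finset.mem_union, Finset.mem_filter, Finset.mem_filter] at hp hq
      have hpq' : b = b' := hpq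
      subst hpq'
      rcases hp with hp | hp <;> rcases hq with hq | hq
      · exact hN.1.2.2 _ hp.1 _ hq.1 hpq
      · exact absurd ((hT a a' ⟨b, hp.1, hq.1⟩).2 hq.2) hp.2
      · exact absurd ((hT a' a ⟨b, hq.1, hp.1⟩).2 hp.2) hq.2
      · exact hM.2.2 _ hp.1 _ hq.1 hpq
  have hle := hN.2 _ hN'
  have hdisj : Disjoint (N.filter (fun e => e.1 ∉ T)) (M.filter (fun e => e.1 ∈ T)) := by
    rw [Finset.disjoint_left]
    intro e h1 h2
    exact (Finset.mem_filter.1 h1).2 (Finset.mem_filter.1 h2).2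
  rw [Finset.card_union_of_disjoint hdisj] at hle
  have hs := Finset.card_filter_add_card_filter_not (s := N) (fun e => e.1 ∈ T)
  have hMT : T.card ≤ (M.filter (fun e => e.1 ∈ T)).card := by
    have : T ⊆ (M.filter (fun e => e.1 ∈ T)).image Prod.fst := by
      intro x hx
      obtain ⟨b, hb⟩ := hall x hx
      exact Finset.mem_image.2 ⟨(x, b), Finset.mem_filter.2 ⟨hb, hx⟩, rfl⟩
    exact (Finset.card_le_card this).trans Finset.card_image_le
  have hNT : (N.filter (fun e => e.1 ∈ T)).card < T.card := by
    have h1 : ((N.filter (fun e => e.1 ∈ T)).image Prod.fst).card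
        = (N.filter (fun e => e.1 ∈ T)).card := by
      apply Finset.card_image_of_injOn
      intro p hp q hq hpq
      exact hN.1.2.1 _ (Finset.mem_filter.1 hp).1 _ (Finset.mem_filter.1 hq).1 hpq
    rw [← h1]
    apply Finset.card_lt_card
    rw [Finset.ssubset_iff_of_subset]
    · refine ⟨x0, hx0, ?_⟩
      intro h
      obtain ⟨⟨x, b⟩, he, rfl⟩ := Finset.mem_image.1 h
      exact hn ⟨b, (Finset.mem_filter.1 he).1⟩
    · intro x hx
      obtain ⟨e, he, rfl⟩ := Finset.mem_image.1 hx
      exact (Finset.mem_filter.1 he).2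
  omega

theorem backward [Fintype A] [Fintype B] {I : PrefSys A B} (hI : I.IsValid)
    {M : Finset (A × B)} (hM : IsMatching I M)
    (hc : ∀ (v : A ⊕ B) (C : (graphOf I).Walk v v), IsAltCycle I M C → ¬ 0 < wtWalk I M C)
    (hp : ∀ (u v : A ⊕ B) (p : (graphOf I).Walk u v),
          IsAltPath I M p → (unmatchedNode M u ∨ unmatchedNode M v) → ¬ 0 < wtWalk I M p)
    (N : Finset (A × B)) (hN : IsMaximumMatching I N) : 0 ≤ Delta I M N := by
  by_contra hneg
  have hpos : 0 < ∑ e ∈ N, wt I M e.1 e.2 := by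
    have h1 := Delta_neg I M N
    have h2 := Delta_eq hI hM hN.1
    omega
  have hne : ∃ e, e ∈ N := by
    by_contra h
    push Not at h
    rw [Finset.sum_eq_zero (fun e he => absurd he (h e))] at hpos
    omega
  obtain ⟨⟨-, b0⟩, -⟩ := hne
  have hnb : ∀ a, ∃ b, matchedA N a → (a, b) ∈ N := by
    intro a
    by_cases h : matchedA N a
    · obtain ⟨b, hb⟩ := h
      exact ⟨b, fun _ => hb⟩
    · exact ⟨b0, fun h' => absurd h' h⟩
  choose nb hnb using hnb
  let w : A → ℤ := fun a => if matchedA N a then wt I M a (nb a) else 0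
  have hw : ∑ a, w a = ∑ e ∈ N, wt I M e.1 e.2 := by
    rw [← Finset.sum_filter]
    symm
    apply Finset.sum_nbij Prod.fst
    · rintro ⟨a, b⟩ h
      exact Finset.mem_filter.2 ⟨Finset.mem_univ _, b, h⟩
    · intro p hp q hq hpq
      exact hN.1.2.1 _ hp _ hq hpq
    · intro a ha
      have := (Finset.mem_filter.1 ha).2
      exact ⟨(a, nb a), hnb a this, rfl⟩
    · rintro ⟨a, b⟩ h
      have h1 := uniqA hN.1 h (hnb a ⟨b, h⟩)
      simp only
      rw [← h1]
  let R : A → A → Prop := fun x y => ∃ b, (x, b) ∈ N ∧ (y, b) ∈ M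
  have hf : ∀ x y z, R x y → R x z → y = z := by
    rintro x y z ⟨b, h1, h2⟩ ⟨b', h3, h4⟩
    have := uniqA hN.1 h1 h3
    subst this
    exact uniqB hM h2 h4
  have hi : ∀ x y z, R x z → R y z → x = y := by
    rintro x y z ⟨b, h1, h2⟩ ⟨b', h3, h4⟩
    have := uniqA hM h2 h4
    subst this
    exact uniqB hN.1 h1 h3
  obtain ⟨k, a, hk, hinj, hch, hend, hsum⟩ := chain_decomp R hf hi w _ Finset.univ le_rfl
    (by simp) (by rw [hw]; exact hpos)
  have hcl := chain_closed R hf hi k a hk hch hend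
  have hRnb : ∀ x y, R x y → (x, nb x) ∈ N ∧ (y, nb x) ∈ M := by
    rintro x y ⟨b, h1, h2⟩
    have h3 := hnb x ⟨b, h1⟩
    have := uniqA hN.1 h1 h3
    subst this
    exact ⟨h1, h2⟩
  obtain ⟨m, rfl⟩ : ∃ m, k = m + 1 := ⟨k - 1, by omega⟩
  rw [show m + 1 - 1 = m by omega] at hend
  have hpre : ∀ i < m, (a i, nb (a i)) ∈ N ∧ (a (i + 1), nb (a i)) ∈ M ∧ (a i, nb (a i)) ∉ M := by
    intro i hi
    obtain ⟨h1, h2⟩ := hRnb _ _ (hch i (by omega))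
    refine ⟨h1, h2, fun h3 => ?_⟩
    have := hinj _ (by omega) _ (by omega) (uniqB hM h2 h3)
    omega
  have hbinj : ∀ i j, (a i, nb (a i)) ∈ N → (a j, nb (a j)) ∈ N → i < m + 1 → j < m + 1 →
      nb (a i) = nb (a j) → i = j := by
    intro i j h1 h2 hi hj h
    rw [h] at h1
    exact hinj _ hi _ hj (uniqB hN.1 h1 h2)
  have hwm : ∀ i, (a i, nb (a i)) ∈ N → w (a i) = wt I M (a i) (nb (a i)) := by
    intro i h
    exact if_pos ⟨_, h⟩
  by_cases hlast : matchedA N (a m)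
  · have hml := hnb _ hlast
    have hall : ∀ i, i ≤ m → (a i, nb (a i)) ∈ N := by
      intro i hi
      rcases Nat.lt_or_ge i m with h | h
      · exact (hpre i h).1
      · rwa [show i = m by omega]
    have hsum' : 0 < ∑ i ∈ Finset.range (m + 1), wt I M (a i) (nb (a i)) := by
      rw [← Finset.sum_congr rfl (fun i hi => hwm i (hall i (by
        have := Finset.mem_range.1 hi; omega)))]
      exact hsum
    by_cases hlm : (a m, nb (a m)) ∈ M
    · -- degenerate closed chain
      have hR : R (a m) (a m) := ⟨_, hml, hlm⟩
      rcases hend with he | ⟨-, he⟩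
      · have h1 := hinj _ (by omega) _ (by omega) (hf _ _ _ he hR)
        subst h1
        rw [zero_add, Finset.sum_range_one, wt_mem hI hM hlm] at hsum'
        omega
      · exact he _ hR
    have hE : ∀ i, i ≤ m → I.E (a i) (nb (a i)) ∧ (a i, nb (a i)) ∉ M := by
      intro i hi
      refine ⟨hN.1.1 _ (hall i hi), ?_⟩
      rcases Nat.lt_or_ge i m with h | h
      · exact (hpre i h).2.2
      · rwa [show i = m by omega]
    rcases hend with he | ⟨-, he⟩
    · have h0 := (hRnb _ _ he).2
      have hm0 : 0 < m := by
        rcases Nat.eq_zero_or_pos m with h | h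
        · subst h; exact absurd h0 hlm
        · exact h
      exact no_cycle hI hM hc a (fun i => nb (a i)) m hm0 hE (fun i hi => (hpre i hi).2.1)
        (fun i j hi hj => hinj i (by omega) j (by omega))
        (fun i j hi hj => hbinj i j (hall i hi) (hall j hj) (by omega) (by omega)) h0 hsum'
    · refine no_path hI hM hp a (fun i => nb (a i)) (2 * m + 1) (fun i hi => hE i (by omega))
        (fun i hi => (hpre i (by omega)).2.1)
        (fun i j hi hj => hinj i (by omega) j (by omega))
        (fun i j hi hj => hbinj i j (hall i (by omega)) (hall j (by omega)) (by omega) (by omega))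
        (Or.inr ?_) ?_
      · rw [seqv_odd]
        rintro ⟨x, hx⟩
        exact he x ⟨_, hml, hx⟩
      · rw [show (2 * m + 1 + 1) / 2 = m + 1 by omega]
        exact hsum'
  · have hwl : w (a m) = 0 := if_neg hlast
    rw [Finset.sum_range_succ, hwl, add_zero] at hsum
    by_cases h0 : matchedA M (a 0)
    · apply improve hM hN _ hcl _ (a m) _ hlast
      · intro x hx
        obtain ⟨i, hi, rfl⟩ := Finset.mem_image.1 hx
        rw [Finset.mem_range] at hi
        rcases i with _ | i
        · exact h0
        · exact ⟨_, (hpre i (by omega)).2.1⟩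
      · exact Finset.mem_image.2 ⟨m, by simp, rfl⟩
    · refine no_path hI hM hp a (fun i => nb (a i)) (2 * m)
        (fun i hi => ⟨hN.1.1 _ (hpre i (by omega)).1, (hpre i (by omega)).2.2⟩)
        (fun i hi => (hpre i (by omega)).2.1)
        (fun i j hi hj => hinj i (by omega) j (by omega))
        (fun i j hi hj => hbinj i j (hpre i (by omega)).1 (hpre j (by omega)).1
          (by omega) (by omega))
        (Or.inl h0) ?_
      rw [show (2 * m + 1) / 2 = m by omega]
      rw [← Finset.sum_congr rfl (fun i hi => hwm i (hpre i (Finset.mem_range.1 hi)).1)]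
      exact hsum


/-- A maximum matching `M` is a popular max-matching iff
(1) there is no alternating cycle `C` wrt `M` with `wt_M(C) > 0`, and
(2) there is no alternating path `p` wrt `M` with an endpoint unmatched in `M`
and `wt_M(p) > 0`. -/
theorem stmt0 {A B : Type*} [Fintype A] [Fintype B] [DecidableEq A] [DecidableEq B]
    (I : PrefSys A B) (hI : I.IsValid) (M : Finset (A × B))
    (hM : IsMaximumMatching I M) :
    IsPopularMaxMatching I M ↔
      ((∀ (v : A ⊕ B) (C : (graphOf I).Walk v v),
          IsAltCycle I M C → ¬ 0 < wtWalk I M C) ∧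
       (∀ (u v : A ⊕ B) (p : (graphOf I).Walk u v),
          IsAltPath I M p → (unmatchedNode M u ∨ unmatchedNode M v) →
          ¬ 0 < wtWalk I M p)) := by
  constructor
  · intro hpop
    refine ⟨fun v C hC h => absurd h (not_lt.2 (forward_cycle hI hpop C hC)), ?_⟩
    rintro u v p hp (hu | hu) h
    · exact absurd h (not_lt.2 (forward_path hI hpop p hp hu))
    · exact absurd h (not_lt.2 (forward_path_rev hI hpop p hp hu))
  · rintro ⟨hc, hp⟩
    exact ⟨hM, fun N hN => backward hI hM.1 hc hp N hN⟩

end PopMax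
end
end

section
/- Let M be a maximum matching in G and let ρ be either an alternating cycle with respect to M, or an alternating path with respect to M such that one endpoint of ρ is unmatched in M (with the edge of ρ at that endpoint not in M) and the edge of ρ at the other endpoint belongs to M. If wt_M(ρ) ≥ 2, then N = M ⊕ ρ (the symmetric difference) is a maximum matching in G satisfying Δ(N,M) ≥ wt_M(ρ) − 1 ≥ 1; in particular N is a maximum matching that is more popular than M. -/
open Classical

noncomputable section

namespace PopMax

variable {A B : Type*}

section Helpers

theorem edges_getElem_aux {V : Type*} {G : SimpleGraph V} {u v : V} (p : G.Walk u v) (i : ℕ)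
    (h : i < p.edges.length) : p.edges[i] = s(p.getVert i, p.getVert (i + 1)) := by
  induction p generalizing i with
  | nil => simp at h
  | cons hadj q ih =>
    cases i with
    | zero => simp
    | succ j =>
      simp only [SimpleGraph.Walk.edges_cons, List.getElem_cons_succ,
        SimpleGraph.Walk.getVert_cons_succ]
      exact ih j _

theorem mem_edges_aux {V : Type*} {G : SimpleGraph V} {u v : V} (p : G.Walk u v) (e : Sym2 V) :
    e ∈ p.edges ↔ ∃ i, i < p.length ∧ e = s(p.getVert i, p.getVert (i + 1)) := by
  rw [List.mem_iff_getElem]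
  constructor
  · rintro ⟨i, hi, rfl⟩
    exact ⟨i, by simpa using hi, edges_getElem_aux p i hi⟩
  · rintro ⟨i, hi, rfl⟩
    exact ⟨i, by simpa using hi, edges_getElem_aux p i _⟩

theorem path_struct {V : Type*} (Q : Sym2 V → Prop) (g : ℕ → V) (n : ℕ)
    (hg : ∀ i j, i ≤ n → j ≤ n → g i = g j → i = j)
    (hc : ∀ i, i + 1 < n → (Q s(g i, g (i+1)) ↔ ¬ Q s(g (i+1), g (i+2)))) :
    (∀ x i j, i < n → j < n → x ∈ s(g i, g (i+1)) → x ∈ s(g j, g (j+1)) →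
      s(g i, g (i+1)) ≠ s(g j, g (j+1)) → (Q s(g i, g (i+1)) ↔ ¬ Q s(g j, g (j+1)))) ∧
    (∀ x i, i < n → x ∈ s(g i, g (i+1)) →
      (∃ j, j < n ∧ x ∈ s(g j, g (j+1)) ∧ (Q s(g i, g (i+1)) ↔ ¬ Q s(g j, g (j+1)))) ∨
      (x = g 0 ∧ i = 0) ∨ (x = g n ∧ i + 1 = n)) := by
  constructor
  · intro x i j hi hj hxi hxj hne
    have key : i = j ∨ i + 1 = j ∨ j + 1 = i := by
      simp only [Sym2.mem_iff] at hxi hxj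
      rcases hxi with h | h <;> rcases hxj with h' | h' <;> rw [h] at h' <;>
        have := hg _ _ (by omega) (by omega) h' <;> omega
    rcases key with rfl | rfl | rfl
    · exact absurd rfl hne
    · exact hc i hj
    · have := hc j hi
      tauto
  · intro x i hi hx
    rcases Sym2.mem_iff.1 hx with h | h
    · cases i with
      | zero => right; left; exact ⟨h, rfl⟩
      | succ k =>
        left
        refine ⟨k, by omega, by simp [h], ?_⟩
        have := hc k hi
        tauto
    · by_cases hn : i + 1 < n
      · left
        exact ⟨i + 1, hn, by simp [h], hc i hn⟩
      · right; right
        have : i + 1 = n := by omega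
        exact ⟨by rw [h, this], this⟩

theorem cycle_struct {V : Type*} (Q : Sym2 V → Prop) (g : ℕ → V) (n : ℕ) (hn : 0 < n)
    (hg : ∀ i j, 1 ≤ i → 1 ≤ j → i ≤ n → j ≤ n → g i = g j → i = j) (h0 : g 0 = g n)
    (hc : ∀ i, i + 1 < n → (Q s(g i, g (i+1)) ↔ ¬ Q s(g (i+1), g (i+2))))
    (hw : Q s(g (n-1), g n) ↔ ¬ Q s(g 0, g 1)) :
    (∀ x i j, i < n → j < n → x ∈ s(g i, g (i+1)) → x ∈ s(g j, g (j+1)) →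
      s(g i, g (i+1)) ≠ s(g j, g (j+1)) → (Q s(g i, g (i+1)) ↔ ¬ Q s(g j, g (j+1)))) ∧
    (∀ x i, i < n → x ∈ s(g i, g (i+1)) →
      (∃ j, j < n ∧ x ∈ s(g j, g (j+1)) ∧ (Q s(g i, g (i+1)) ↔ ¬ Q s(g j, g (j+1))))) := by
  have hg' : ∀ i j, i ≤ n → j ≤ n → g i = g j → i = j ∨ (i = 0 ∧ j = n) ∨ (i = n ∧ j = 0) := by
    intro i j hi hj h
    rcases Nat.eq_zero_or_pos i with rfl | hi' <;> rcases Nat.eq_zero_or_pos j with rfl | hj'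
    · simp
    · rw [h0] at h
      have := hg _ _ (by omega) (by omega) (by omega) (by omega) h
      omega
    · rw [h0] at h
      have := hg _ _ (by omega) (by omega) (by omega) (by omega) h
      omega
    · left; exact hg _ _ hi' hj' hi hj h
  obtain ⟨m, rfl⟩ : ∃ m, n = m + 1 := ⟨n - 1, by omega⟩
  simp only [Nat.add_sub_cancel] at hw
  constructor
  · intro x i j hi hj hxi hxj hne
    have key : i = j ∨ i + 1 = j ∨ j + 1 = i ∨ (i = 0 ∧ j = m) ∨ (i = m ∧ j = 0) := by
      simp only [Sym2.mem_iff] at hxi hxj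
      rcases hxi with h | h <;> rcases hxj with h' | h' <;> rw [h] at h' <;>
        have := hg' _ _ (by omega) (by omega) h' <;> omega
    rcases key with rfl | rfl | rfl | ⟨rfl, rfl⟩ | ⟨rfl, rfl⟩
    · exact absurd rfl hne
    · exact hc i hj
    · have := hc j hi
      tauto
    · simp only [zero_add]
      tauto
    · simp only [zero_add]
      tauto
  · intro x i hi hx
    rcases Sym2.mem_iff.1 hx with h | h
    · cases i with
      | zero =>
        refine ⟨m, by omega, by simp [h, h0], ?_⟩
        simp only [zero_add]
        tauto
      | succ k =>
        refine ⟨k, by omega, by simp [h], ?_⟩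
        have := hc k hi
        tauto
    · by_cases hn : i + 1 < m + 1
      · exact ⟨i + 1, hn, by simp [h], hc i hn⟩
      · have : i = m := by omega
        subst this
        exact ⟨0, by omega, by simp [h, h0], by simpa using hw⟩

/-- The undirected edge of a pair. -/
def sye (p : A × B) : Sym2 (A ⊕ B) := s(Sum.inl p.1, Sum.inr p.2)

theorem sye_inj (p q : A × B) (h : sye p = sye q) : p = q := by
  rcases p with ⟨a, b⟩; rcases q with ⟨a', b'⟩
  simpa [sye] using h

theorem edgeInM_sye (M : Finset (A × B)) (p : A × B) : edgeInM M (sye p) ↔ p ∈ M := by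
  constructor
  · rintro ⟨a, b, hab, h⟩
    have := sye_inj p (a, b) h
    rwa [this]
  · intro h
    exact ⟨p.1, p.2, h, rfl⟩

theorem graph_edge (I : PrefSys A B) (e : Sym2 (A ⊕ B)) (he : e ∈ (graphOf I).edgeSet) :
    ∃ p : A × B, e = sye p := by
  induction e with
  | _ x y =>
    rw [SimpleGraph.mem_edgeSet] at he
    rcases x with a | b <;> rcases y with a' | b' <;>
      simp [graphOf] at he
    · exact ⟨(a, b'), rfl⟩
    · exact ⟨(a', b), Sym2.eq_swap⟩

theorem graph_E (I : PrefSys A B) (p : A × B) (he : sye p ∈ (graphOf I).edgeSet) :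
    I.E p.1 p.2 := by
  simpa [sye, graphOf] using he

theorem isMatching_iff (I : PrefSys A B) (M : Finset (A × B)) :
    IsMatching I M ↔ (∀ p ∈ M, I.E p.1 p.2) ∧
      ∀ x, ∀ p ∈ M, ∀ q ∈ M, x ∈ sye p → x ∈ sye q → p = q := by
  constructor
  · rintro ⟨h1, h2, h3⟩
    refine ⟨h1, ?_⟩
    rintro (a | b) p hp q hq hx hy
    · exact h2 p hp q hq (by simp [sye] at hx hy; rw [← hx, ← hy])
    · exact h3 p hp q hq (by simp [sye] at hx hy; rw [← hx, ← hy])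
  · rintro ⟨h1, h2⟩
    refine ⟨h1, ?_, ?_⟩
    · intro p hp q hq h
      exact h2 (Sum.inl p.1) p hp q hq (by simp [sye]) (by simp [sye, h])
    · intro p hp q hq h
      exact h2 (Sum.inr p.2) p hp q hq (by simp [sye]) (by simp [sye, h])

theorem unmatchedNode_iff (M : Finset (A × B)) (x : A ⊕ B) :
    unmatchedNode M x ↔ ∀ p ∈ M, x ∉ sye p := by
  rcases x with a | b
  · simp only [unmatchedNode, matchedA, sye]
    constructor
    · rintro h ⟨a', b'⟩ hp hx
      simp at hx
      subst hx
      exact h ⟨b', hp⟩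
    · rintro h ⟨b', hp⟩
      exact h _ hp (by simp)
  · simp only [unmatchedNode, matchedB, sye]
    constructor
    · rintro h ⟨a', b'⟩ hp hx
      simp at hx
      subst hx
      exact h ⟨a', hp⟩
    · rintro h ⟨b', hp⟩
      exact h _ hp (by simp)

/-- vote of a node comparing `N` against `M`. -/
def vote (I : PrefSys A B) (N M : Finset (A × B)) (x : A ⊕ B) : ℤ :=
  (if prefers I x N M then 1 else 0) - (if prefers I x M N then 1 else 0)

theorem Delta_eq_s1 [Fintype A] [Fintype B] (I : PrefSys A B) (N M : Finset (A × B)) :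
    Delta I N M = ∑ x, vote I N M x := by
  simp [Delta, phi, vote, Finset.sum_sub_distrib]

theorem wt_of_mem (I : PrefSys A B) (hI : I.IsValid) (M : Finset (A × B)) (hM : IsMatching I M)
    (p : A × B) (hp : p ∈ M) : wt I M p.1 p.2 = 0 := by
  obtain ⟨h1, -⟩ := hI
  unfold wt
  rw [if_neg, if_neg]
  · rintro ⟨⟨b', hb, hpr⟩, -⟩
    have := hM.2.1 _ hb _ hp rfl
    rw [Prod.ext_iff] at this
    simp only at this
    rw [this.2] at hpr
    exact h1 _ _ hpr
  · rintro ⟨-, h, -⟩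
    exact h hp

theorem voteA_eq (I : PrefSys A B) (hI : I.IsValid) (M N : Finset (A × B)) (hM : IsMatching I M)
    (hN : IsMatching I N) (a : A) (b : B) (hp : (a, b) ∈ N) (hp' : (a, b) ∉ M) :
    ((¬ matchedA M a ∨ ∃ b', (a, b') ∈ M ∧ I.prefA a b b') ∧
      ¬ (∃ b', (a, b') ∈ M ∧ I.prefA a b' b) ∧ vote I N M (Sum.inl a) = 1) ∨
    (¬ (¬ matchedA M a ∨ ∃ b', (a, b') ∈ M ∧ I.prefA a b b') ∧
      (∃ b', (a, b') ∈ M ∧ I.prefA a b' b) ∧ vote I N M (Sum.inl a) = -1) := by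
  obtain ⟨i1, i2, i3, -⟩ := hI
  have uN : ∀ b', (a, b') ∈ N → b' = b := fun b' h => by
    have := hN.2.1 _ h _ hp rfl
    simpa using this
  have mN : matchedA N a := ⟨b, hp⟩
  have e1 : prefers I (Sum.inl a) N M ↔
      (¬ matchedA M a ∨ ∃ b', (a, b') ∈ M ∧ I.prefA a b b') := by
    constructor
    · rintro ⟨b', h, h'⟩
      rwa [uN b' h] at h'
    · intro h
      exact ⟨b, hp, h⟩
  have e2 : prefers I (Sum.inl a) M N ↔ (∃ b', (a, b') ∈ M ∧ I.prefA a b' b) := by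
    constructor
    · rintro ⟨b', h, h' | ⟨b'', h1, h2⟩⟩
      · exact absurd mN h'
      · rw [uN _ h1] at h2
        exact ⟨b', h, h2⟩
    · rintro ⟨b', h, h'⟩
      exact ⟨b', h, Or.inr ⟨b, hp, h'⟩⟩
  unfold vote
  rw [← e1, ← e2]
  have x1 : prefers I (Sum.inl a) N M → ¬ prefers I (Sum.inl a) M N := by
    rw [e1, e2]
    rintro (h | ⟨b', h, h'⟩) ⟨c, hc, hc'⟩
    · exact h ⟨c, hc⟩
    · have : b' = c := by simpa using hM.2.1 _ h _ hc rfl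
      subst this
      exact i1 _ _ (i2 _ _ _ _ h' hc')
  have x2 : ¬ prefers I (Sum.inl a) N M → prefers I (Sum.inl a) M N := by
    rw [e1, e2]
    intro h
    push Not at h
    obtain ⟨⟨c, hc⟩, h2⟩ := h
    refine ⟨c, hc, ?_⟩
    rcases i3 a b c (hN.1 _ hp) (hM.1 _ hc) (by rintro rfl; exact hp' hc) with h | h
    · exact absurd h (h2 c hc)
    · exact h
  by_cases h : prefers I (Sum.inl a) N M
  · left; refine ⟨h, x1 h, ?_⟩; simp [h, x1 h]
  · right; refine ⟨h, x2 h, ?_⟩; simp [h, x2 h]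

theorem voteB_eq (I : PrefSys A B) (hI : I.IsValid) (M N : Finset (A × B)) (hM : IsMatching I M)
    (hN : IsMatching I N) (a : A) (b : B) (hp : (a, b) ∈ N) (hp' : (a, b) ∉ M) :
    ((¬ matchedB M b ∨ ∃ a', (a', b) ∈ M ∧ I.prefB b a a') ∧
      ¬ (∃ a', (a', b) ∈ M ∧ I.prefB b a' a) ∧ vote I N M (Sum.inr b) = 1) ∨
    (¬ (¬ matchedB M b ∨ ∃ a', (a', b) ∈ M ∧ I.prefB b a a') ∧
      (∃ a', (a', b) ∈ M ∧ I.prefB b a' a) ∧ vote I N M (Sum.inr b) = -1) := by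
  obtain ⟨-, -, -, i1, i2, i3⟩ := hI
  have uN : ∀ a', (a', b) ∈ N → a' = a := fun a' h => by
    have := hN.2.2 _ h _ hp rfl
    simpa using this
  have mN : matchedB N b := ⟨a, hp⟩
  have e1 : prefers I (Sum.inr b) N M ↔
      (¬ matchedB M b ∨ ∃ a', (a', b) ∈ M ∧ I.prefB b a a') := by
    constructor
    · rintro ⟨b', h, h'⟩
      rwa [uN b' h] at h'
    · intro h
      exact ⟨a, hp, h⟩
  have e2 : prefers I (Sum.inr b) M N ↔ (∃ a', (a', b) ∈ M ∧ I.prefB b a' a) := by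
    constructor
    · rintro ⟨b', h, h' | ⟨b'', h1, h2⟩⟩
      · exact absurd mN h'
      · rw [uN _ h1] at h2
        exact ⟨b', h, h2⟩
    · rintro ⟨b', h, h'⟩
      exact ⟨b', h, Or.inr ⟨a, hp, h'⟩⟩
  unfold vote
  rw [← e1, ← e2]
  have x1 : prefers I (Sum.inr b) N M → ¬ prefers I (Sum.inr b) M N := by
    rw [e1, e2]
    rintro (h | ⟨b', h, h'⟩) ⟨c, hc, hc'⟩
    · exact h ⟨c, hc⟩
    · have : b' = c := by simpa using hM.2.2 _ h _ hc rfl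
      subst this
      exact i1 _ _ (i2 _ _ _ _ h' hc')
  have x2 : ¬ prefers I (Sum.inr b) N M → prefers I (Sum.inr b) M N := by
    rw [e1, e2]
    intro h
    push Not at h
    obtain ⟨⟨c, hc⟩, h2⟩ := h
    refine ⟨c, hc, ?_⟩
    rcases i3 b a c (hN.1 _ hp) (hM.1 _ hc) (by rintro rfl; exact hp' hc) with h | h
    · exact absurd h (h2 c hc)
    · exact h
  by_cases h : prefers I (Sum.inr b) N M
  · left; refine ⟨h, x1 h, ?_⟩; simp [h, x1 h]
  · right; refine ⟨h, x2 h, ?_⟩; simp [h, x2 h]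

theorem wt_eq_vote (I : PrefSys A B) (hI : I.IsValid) (M N : Finset (A × B)) (hM : IsMatching I M)
    (hN : IsMatching I N) (p : A × B) (hp : p ∈ N) (hp' : p ∉ M) :
    wt I M p.1 p.2 = vote I N M (Sum.inl p.1) + vote I N M (Sum.inr p.2) := by
  obtain ⟨a, b⟩ := p
  have hE : I.E a b := hN.1 _ hp
  unfold wt Blocks
  rcases voteA_eq I hI M N hM hN a b hp hp' with ⟨h1, h2, h3⟩ | ⟨h1, h2, h3⟩ <;>
  rcases voteB_eq I hI M N hM hN a b hp hp' with ⟨h4, h5, h6⟩ | ⟨h4, h5, h6⟩ <;>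
  simp only [h1, h2, h3, h4, h5, h6, hE, hp'] <;> simp

theorem vote_nonneg (I : PrefSys A B) (hI : I.IsValid) (M N : Finset (A × B)) (hM : IsMatching I M)
    (x : A ⊕ B) (hx : ∀ p ∈ N, x ∈ sye p → p ∈ M)
    (hl : ∀ p ∈ M, x ∈ sye p → ∃ q ∈ N, x ∈ sye q) : 0 ≤ vote I N M x := by
  have : ¬ prefers I x M N := by
    rcases x with a | b
    · rintro ⟨b, h, h' | ⟨b', h1, h2⟩⟩
      · obtain ⟨⟨c, d⟩, hq, hq'⟩ := hl _ h (by simp [sye])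
        simp [sye] at hq'
        subst hq'
        exact h' ⟨_, hq⟩
      · have : b = b' := by simpa using hM.2.1 _ h _ (hx _ h1 (by simp [sye])) rfl
        subst this
        exact hI.1 _ _ h2
    · rintro ⟨b, h, h' | ⟨b', h1, h2⟩⟩
      · obtain ⟨⟨c, d⟩, hq, hq'⟩ := hl _ h (by simp [sye])
        simp [sye] at hq'
        subst hq'
        exact h' ⟨_, hq⟩
      · have : b = b' := by simpa using hM.2.2 _ h _ (hx _ h1 (by simp [sye])) rfl
        subst this
        exact hI.2.2.2.1 _ _ h2
  unfold vote
  rw [if_neg this]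
  split_ifs <;> simp

theorem vote_ge (I : PrefSys A B) (M N : Finset (A × B)) (x : A ⊕ B) : -1 ≤ vote I N M x := by
  unfold vote
  split_ifs <;> simp

theorem sum_wt_le [Fintype A] [Fintype B] (I : PrefSys A B) (hI : I.IsValid)
    (M N : Finset (A × B)) (hM : IsMatching I M) (hN : IsMatching I N) (w : A ⊕ B)
    (hl : ∀ x, ∀ p ∈ M, x ∈ sye p → (∃ q ∈ N, x ∈ sye q) ∨ x = w) :
    ∑ p ∈ N \ M, wt I M p.1 p.2 - 1 ≤ Delta I N M := by
  have h1 : ∑ p ∈ N \ M, wt I M p.1 p.2 =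
      ∑ x ∈ ((N \ M).image Prod.fst).disjSum ((N \ M).image Prod.snd), vote I N M x := by
    rw [Finset.sum_disjSum, Finset.sum_image, Finset.sum_image, ← Finset.sum_add_distrib]
    · apply Finset.sum_congr rfl
      intro p hp
      rw [Finset.mem_sdiff] at hp
      exact wt_eq_vote I hI M N hM hN p hp.1 hp.2
    · intro p hp q hq h
      simp only [Finset.coe_sdiff, Set.mem_diff, Finset.mem_coe] at hp hq
      exact hN.2.2 p hp.1 q hq.1 h
    · intro p hp q hq h
      simp only [Finset.coe_sdiff, Set.mem_diff, Finset.mem_coe] at hp hq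
      exact hN.2.1 p hp.1 q hq.1 h
  have h2 : ∑ x ∈ ((N \ M).image Prod.fst).disjSum ((N \ M).image Prod.snd), vote I N M x ≤
      ∑ x, (vote I N M x + if x = w then 1 else 0) := by
    calc _ ≤ ∑ x ∈ ((N \ M).image Prod.fst).disjSum ((N \ M).image Prod.snd),
            (vote I N M x + if x = w then 1 else 0) := by
          apply Finset.sum_le_sum
          intro x _
          split_ifs <;> simp
      _ ≤ _ := by
          apply Finset.sum_le_sum_of_subset_of_nonneg (Finset.subset_univ _)
          intro x _ hx
          by_cases hxw : x = w
          · have := vote_ge I M N x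
            rw [if_pos hxw]; omega
          · rw [if_neg hxw, add_zero]
            apply vote_nonneg I hI M N hM
            · intro p hp hxp
              by_contra hpM
              apply hx
              have hm : p ∈ N \ M := Finset.mem_sdiff.2 ⟨hp, hpM⟩
              rcases Sym2.mem_iff.1 hxp with h | h
              · rw [h, Finset.inl_mem_disjSum]
                exact Finset.mem_image_of_mem _ hm
              · rw [h, Finset.inr_mem_disjSum]
                exact Finset.mem_image_of_mem _ hm
            · intro p hp hxp
              exact (hl x p hp hxp).resolve_right hxw
  rw [Finset.sum_add_distrib, Finset.sum_ite_eq'] at h2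
  simp only [Finset.mem_univ, if_true] at h2
  rw [Delta_eq_s1, h1]
  omega

theorem card_le_of_loss (I : PrefSys A B)
    (M N : Finset (A × B)) (hM : IsMatching I M) (w : A ⊕ B)
    (hl : ∀ x, ∀ p ∈ M, x ∈ sye p → (∃ q ∈ N, x ∈ sye q) ∨ x = w) : M.card ≤ N.card := by
  rcases w with a | b
  · have h1 : (M.image Prod.snd).card = M.card :=
      Finset.card_image_of_injOn (fun p hp q hq h => hM.2.2 p hp q hq h)
    rw [← h1]
    refine le_trans (Finset.card_le_card (t := N.image Prod.snd) ?_) Finset.card_image_le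
    intro b hb
    obtain ⟨p, hp, rfl⟩ := Finset.mem_image.1 hb
    rcases hl (Sum.inr p.2) p hp (by simp [sye]) with ⟨q, hq, hq'⟩ | h
    · simp [sye] at hq'
      rw [hq']
      exact Finset.mem_image_of_mem _ hq
    · simp at h
  · have h1 : (M.image Prod.fst).card = M.card :=
      Finset.card_image_of_injOn (fun p hp q hq h => hM.2.1 p hp q hq h)
    rw [← h1]
    refine le_trans (Finset.card_le_card (t := N.image Prod.fst) ?_) Finset.card_image_le
    intro b hb
    obtain ⟨p, hp, rfl⟩ := Finset.mem_image.1 hb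
    rcases hl (Sum.inl p.1) p hp (by simp [sye]) with ⟨q, hq, hq'⟩ | h
    · simp [sye] at hq'
      rw [hq']
      exact Finset.mem_image_of_mem _ hq
    · simp at h

theorem core [Fintype A] [Fintype B] [DecidableEq A] [DecidableEq B]
    (I : PrefSys A B) (hI : I.IsValid) (M : Finset (A × B))
    (hM : IsMaximumMatching I M) (P : Finset (A × B)) (w : A ⊕ B)
    (hE : ∀ p ∈ P, I.E p.1 p.2)
    (ha : ∀ x, ∀ p ∈ P, ∀ q ∈ P, x ∈ sye p → x ∈ sye q → p ≠ q → (p ∈ M ↔ q ∉ M))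
    (hb : ∀ x, ∀ p ∈ P, x ∈ sye p → (∃ q ∈ P, x ∈ sye q ∧ (p ∈ M ↔ q ∉ M)) ∨
      (p ∉ M ∧ ∀ q ∈ M, x ∉ sye q) ∨ (p ∈ M ∧ x = w)) :
    IsMaximumMatching I (symmDiff M P) ∧
      ∑ p ∈ P, wt I M p.1 p.2 - 1 ≤ Delta I (symmDiff M P) M := by
  obtain ⟨hM1, hM2⟩ := hM
  have hMm := hM1
  rw [isMatching_iff] at hMm
  obtain ⟨hME, hMu⟩ := hMm
  have hN : IsMatching I (symmDiff M P) := by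
    have hmix : ∀ x, ∀ p ∈ M, p ∉ P → ∀ q ∈ P, q ∉ M → x ∈ sye p → x ∈ sye q → False := by
      intro x p hp hpP q hq hqM hxp hxq
      rcases hb x q hq hxq with ⟨r, hr, hxr, hrM⟩ | ⟨-, h⟩ | ⟨h, -⟩
      · have hrM' : r ∈ M := by tauto
        rw [hMu x p hp r hrM' hxp hxr] at hpP
        exact hpP hr
      · exact h p hp hxp
      · exact hqM h
    rw [isMatching_iff]
    constructor
    · intro p hp
      rcases Finset.mem_symmDiff.1 hp with h | h
      · exact hME p h.1
      · exact hE p h.1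
    · intro x p hp q hq hxp hxq
      rcases Finset.mem_symmDiff.1 hp with ⟨h1, h2⟩ | ⟨h1, h2⟩ <;>
      rcases Finset.mem_symmDiff.1 hq with ⟨h3, h4⟩ | ⟨h3, h4⟩
      · exact hMu x p h1 q h3 hxp hxq
      · exact (hmix x p h1 h2 q h3 h4 hxp hxq).elim
      · exact (hmix x q h3 h4 p h1 h2 hxq hxp).elim
      · by_contra hne
        have := ha x p h1 q h3 hxp hxq hne
        tauto
  have hl : ∀ x, ∀ p ∈ M, x ∈ sye p → (∃ q ∈ symmDiff M P, x ∈ sye q) ∨ x = w := by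
    intro x p hp hx
    by_cases hpP : p ∈ P
    · rcases hb x p hpP hx with ⟨r, hr, hxr, hrM⟩ | ⟨h, -⟩ | ⟨-, h⟩
      · left
        exact ⟨r, Finset.mem_symmDiff.2 (Or.inr ⟨hr, hrM.1 hp⟩), hxr⟩
      · exact absurd hp h
      · exact Or.inr h
    · left
      exact ⟨p, Finset.mem_symmDiff.2 (Or.inl ⟨hp, hpP⟩), hx⟩
  refine ⟨⟨hN, fun N' hN' => (hM2 N' hN').trans (card_le_of_loss I M _ hM1 w hl)⟩, ?_⟩
  have := sum_wt_le I hI M _ hM1 hN w hl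
  have h2 : ∑ p ∈ P, wt I M p.1 p.2 = ∑ p ∈ symmDiff M P \ M, wt I M p.1 p.2 := by
    symm
    apply Finset.sum_subset
    · intro p hp
      rw [Finset.mem_sdiff, Finset.mem_symmDiff] at hp
      tauto
    · intro p hp hp'
      apply wt_of_mem I hI M hM1
      rw [Finset.mem_sdiff, Finset.mem_symmDiff] at hp'
      tauto
  rw [h2]
  convert this

theorem mem_pairsOf [Fintype A] [Fintype B] (I : PrefSys A B) {u v : A ⊕ B}
    (p : (graphOf I).Walk u v) (q : A × B) : q ∈ pairsOf I p ↔ sye q ∈ p.edges := by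
  simp [pairsOf, sye]

theorem wtWalk_eq_s1 [Fintype A] [Fintype B] (I : PrefSys A B) (M : Finset (A × B)) {u v : A ⊕ B}
    (p : (graphOf I).Walk u v) (hnd : p.edges.Nodup) :
    wtWalk I M p = ∑ q ∈ pairsOf I p, wt I M q.1 q.2 := by
  unfold wtWalk
  rw [← List.sum_toFinset _ hnd]
  have : p.edges.toFinset = (pairsOf I p).image sye := by
    ext e
    simp only [List.mem_toFinset, Finset.mem_image, mem_pairsOf]
    constructor
    · intro he
      obtain ⟨q, rfl⟩ := graph_edge I e (p.edges_subset_edgeSet he)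
      exact ⟨q, he, rfl⟩
    · rintro ⟨q, hq, rfl⟩
      exact hq
  rw [this, Finset.sum_image (fun a _ b _ h => sye_inj a b h)]
  rfl

theorem walk_core [Fintype A] [Fintype B] [DecidableEq A] [DecidableEq B]
    (I : PrefSys A B) (hI : I.IsValid) (M : Finset (A × B))
    (hM : IsMaximumMatching I M) (w : A ⊕ B) {u v : A ⊕ B} (p : (graphOf I).Walk u v)
    (hnd : p.edges.Nodup)
    (ha : ∀ x, ∀ e ∈ p.edges, ∀ f ∈ p.edges, x ∈ e → x ∈ f → e ≠ f →
      (edgeInM M e ↔ ¬ edgeInM M f))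
    (hb : ∀ x, ∀ e ∈ p.edges, x ∈ e → (∃ f ∈ p.edges, x ∈ f ∧ (edgeInM M e ↔ ¬ edgeInM M f)) ∨
      (¬ edgeInM M e ∧ unmatchedNode M x) ∨ (edgeInM M e ∧ x = w))
    (hw : 2 ≤ wtWalk I M p) :
    IsMaximumMatching I (symmDiff M (pairsOf I p)) ∧
        wtWalk I M p - 1 ≤ Delta I (symmDiff M (pairsOf I p)) M ∧
        1 ≤ Delta I (symmDiff M (pairsOf I p)) M := by
  have := core I hI M hM (pairsOf I p) w
    (fun q hq => graph_E I q (p.edges_subset_edgeSet ((mem_pairsOf I p q).1 hq)))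
    (by
      intro x q hq r hr hxq hxr hne
      rw [← edgeInM_sye, ← edgeInM_sye]
      exact ha x _ ((mem_pairsOf I p q).1 hq) _ ((mem_pairsOf I p r).1 hr) hxq hxr
        (fun h => hne (sye_inj _ _ h)))
    (by
      intro x q hq hxq
      rw [← unmatchedNode_iff]
      rcases hb x _ ((mem_pairsOf I p q).1 hq) hxq with ⟨f, hf, hxf, h⟩ | h | h
      · left
        obtain ⟨r, rfl⟩ := graph_edge I f (p.edges_subset_edgeSet hf)
        rw [edgeInM_sye, edgeInM_sye] at h
        exact ⟨r, (mem_pairsOf I p r).2 hf, hxf, h⟩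
      · rw [edgeInM_sye] at h
        exact Or.inr (Or.inl h)
      · rw [edgeInM_sye] at h
        exact Or.inr (Or.inr h))
  rw [← wtWalk_eq_s1 I M p hnd] at this
  exact ⟨this.1, this.2, by omega⟩

theorem cycle_case [Fintype A] [Fintype B] [DecidableEq A] [DecidableEq B]
    (I : PrefSys A B) (hI : I.IsValid) (M : Finset (A × B))
    (hM : IsMaximumMatching I M) (v : A ⊕ B) (c : (graphOf I).Walk v v) (hc : IsAltCycle I M c)
    (hw : 2 ≤ wtWalk I M c) :
    IsMaximumMatching I (symmDiff M (pairsOf I c)) ∧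
        wtWalk I M c - 1 ≤ Delta I (symmDiff M (pairsOf I c)) M ∧
        1 ≤ Delta I (symmDiff M (pairsOf I c)) M := by
  obtain ⟨hcyc, hch⟩ := hc
  have hch := List.isChain_iff_getElem.1 hch
  have hlen := hcyc.three_le_length
  have hel := c.length_edges
  have S := cycle_struct (edgeInM M) c.getVert c.length (by omega)
    (fun i j h1 h2 h3 h4 h => hcyc.getVert_injOn ⟨h1, h3⟩ ⟨h2, h4⟩ h) (by simp)
    (by
      intro i hi
      have := hch i (by simp; omega)
      rw [List.getElem_append_left (by omega), List.getElem_append_left (by omega),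
        edges_getElem_aux, edges_getElem_aux] at this
      exact this)
    (by
      have := hch (c.length - 1) (by simp; omega)
      rw [List.getElem_append_left (by omega), List.getElem_append_right (by omega)] at this
      simp only [hel, Nat.sub_add_cancel (show 1 ≤ c.length by omega), Nat.sub_self,
        List.getElem_take, edges_getElem_aux] at this
      exact this)
  refine walk_core I hI M hM v c hcyc.edges_nodup ?_ ?_ hw
  · intro x e he f hf hxe hxf hne
    obtain ⟨i, hi, rfl⟩ := (mem_edges_aux c e).1 he
    obtain ⟨j, hj, rfl⟩ := (mem_edges_aux c f).1 hf
    exact S.1 x i j hi hj hxe hxf hne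
  · intro x e he hxe
    obtain ⟨i, hi, rfl⟩ := (mem_edges_aux c e).1 he
    obtain ⟨j, hj, h1, h2⟩ := S.2 x i hi hxe
    exact Or.inl ⟨_, (mem_edges_aux c _).2 ⟨j, hj, rfl⟩, h1, h2⟩

theorem path_case [Fintype A] [Fintype B] [DecidableEq A] [DecidableEq B]
    (I : PrefSys A B) (hI : I.IsValid) (M : Finset (A × B))
    (hM : IsMaximumMatching I M) (u v : A ⊕ B) (p : (graphOf I).Walk u v) (hne : p.edges ≠ [])
    (hp : IsAltPath I M p)
    (hend : ((unmatchedNode M u ∧ ¬ edgeInM M (p.edges.head hne) ∧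
            edgeInM M (p.edges.getLast hne)) ∨
         (unmatchedNode M v ∧ ¬ edgeInM M (p.edges.getLast hne) ∧
            edgeInM M (p.edges.head hne))))
    (hw : 2 ≤ wtWalk I M p) :
    IsMaximumMatching I (symmDiff M (pairsOf I p)) ∧
        wtWalk I M p - 1 ≤ Delta I (symmDiff M (pairsOf I p)) M ∧
        1 ≤ Delta I (symmDiff M (pairsOf I p)) M := by
  obtain ⟨hpath, hch⟩ := hp
  have hch := List.isChain_iff_getElem.1 hch
  have hel := p.length_edges
  have hpos : 0 < p.length := by
    rw [← hel]; exact List.length_pos_of_ne_nil hne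
  have S := path_struct (edgeInM M) p.getVert p.length
    (fun i j h1 h2 h => hpath.getVert_injOn h1 h2 h)
    (by
      intro i hi
      have := hch i (by omega)
      rw [edges_getElem_aux, edges_getElem_aux] at this
      exact this)
  rw [List.head_eq_getElem_zero, List.getLast_eq_getElem, edges_getElem_aux,
    edges_getElem_aux] at hend
  have ha : ∀ x, ∀ e ∈ p.edges, ∀ f ∈ p.edges, x ∈ e → x ∈ f → e ≠ f →
      (edgeInM M e ↔ ¬ edgeInM M f) := by
    intro x e he f hf hxe hxf hne
    obtain ⟨i, hi, rfl⟩ := (mem_edges_aux p e).1 he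
    obtain ⟨j, hj, rfl⟩ := (mem_edges_aux p f).1 hf
    exact S.1 x i j hi hj hxe hxf hne
  have hb : ∀ x, ∀ e ∈ p.edges, x ∈ e →
      (∃ f ∈ p.edges, x ∈ f ∧ (edgeInM M e ↔ ¬ edgeInM M f)) ∨
      (x = u ∧ e = s(p.getVert 0, p.getVert (0 + 1))) ∨
      (x = v ∧ e = s(p.getVert (p.edges.length - 1), p.getVert (p.edges.length - 1 + 1))) := by
    intro x e he hxe
    obtain ⟨i, hi, rfl⟩ := (mem_edges_aux p e).1 he
    rcases S.2 x i hi hxe with ⟨j, hj, h1, h2⟩ | ⟨h, rfl⟩ | ⟨h, h'⟩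
    · exact Or.inl ⟨_, (mem_edges_aux p _).2 ⟨j, hj, rfl⟩, h1, h2⟩
    · right; left
      exact ⟨by simpa using h, rfl⟩
    · right; right
      have : p.edges.length - 1 = i := by omega
      rw [this]
      exact ⟨by simpa using h, rfl⟩
  rcases hend with ⟨h1, h2, h3⟩ | ⟨h1, h2, h3⟩
  · refine walk_core I hI M hM v p hpath.isTrail.edges_nodup ha ?_ hw
    intro x e he hxe
    rcases hb x e he hxe with h | ⟨rfl, rfl⟩ | ⟨rfl, rfl⟩
    · exact Or.inl h
    · exact Or.inr (Or.inl ⟨h2, h1⟩)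
    · exact Or.inr (Or.inr ⟨h3, rfl⟩)
  · refine walk_core I hI M hM u p hpath.isTrail.edges_nodup ha ?_ hw
    intro x e he hxe
    rcases hb x e he hxe with h | ⟨rfl, rfl⟩ | ⟨rfl, rfl⟩
    · exact Or.inl h
    · exact Or.inr (Or.inr ⟨h3, rfl⟩)
    · exact Or.inr (Or.inl ⟨h2, h1⟩)

end Helpers

/-- If `ρ` is an alternating cycle wrt a maximum matching `M`, or an
alternating path wrt `M` one of whose endpoints is unmatched in `M` (with the edge of `ρ`
there not in `M`) while the edge of `ρ` at the other endpoint is in `M`, and `wt_M(ρ) ≥ 2`,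
then `N = M ⊕ ρ` is a maximum matching with `Δ(N,M) ≥ wt_M(ρ) − 1 ≥ 1`; in particular `N`
is a maximum matching that is more popular than `M`. -/
theorem stmt1 {A B : Type*} [Fintype A] [Fintype B] [DecidableEq A] [DecidableEq B]
    (I : PrefSys A B) (hI : I.IsValid) (M : Finset (A × B))
    (hM : IsMaximumMatching I M) :
    (∀ (v : A ⊕ B) (c : (graphOf I).Walk v v), IsAltCycle I M c →
        2 ≤ wtWalk I M c →
        IsMaximumMatching I (symmDiff M (pairsOf I c)) ∧
        wtWalk I M c - 1 ≤ Delta I (symmDiff M (pairsOf I c)) M ∧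
        1 ≤ Delta I (symmDiff M (pairsOf I c)) M) ∧
    (∀ (u v : A ⊕ B) (p : (graphOf I).Walk u v) (hne : p.edges ≠ []),
        IsAltPath I M p →
        ((unmatchedNode M u ∧ ¬ edgeInM M (p.edges.head hne) ∧
            edgeInM M (p.edges.getLast hne)) ∨
         (unmatchedNode M v ∧ ¬ edgeInM M (p.edges.getLast hne) ∧
            edgeInM M (p.edges.head hne))) →
        2 ≤ wtWalk I M p →
        IsMaximumMatching I (symmDiff M (pairsOf I p)) ∧
        wtWalk I M p - 1 ≤ Delta I (symmDiff M (pairsOf I p)) M ∧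
        1 ≤ Delta I (symmDiff M (pairsOf I p)) M) := by
  exact ⟨fun v c hc hw => cycle_case I hI M hM v c hc hw,
    fun u v p hne hp hend hw => path_case I hI M hM u v p hne hp hend hw⟩

end PopMax
end
end

section
/- Let M and N be maximum matchings in G. Then Δ(N,M) ≤ Σ_ρ wt_M(ρ), where the sum ranges over the connected components ρ (alternating paths and alternating cycles with respect to M) of the symmetric difference M ⊕ N. -/
open Classical

noncomputable section

namespace PopMax

variable {A B : Type*}

lemma wt_zero_of_mem (I : PrefSys A B) (hI : I.IsValid) (M : Finset (A × B))
    (hM : IsMatching I M) (a : A) (b : B) (h : (a, b) ∈ M) : wt I M a b = 0 := by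
  have h1 : ¬ Blocks I M a b := fun hb => hb.2.1 h
  have h2 : ¬ ((∃ b', (a, b') ∈ M ∧ I.prefA a b' b) ∧
      (∃ a', (a', b) ∈ M ∧ I.prefB b a' a)) := by
    rintro ⟨⟨b', hb', hp⟩, _⟩
    have := hM.2.1 _ hb' _ h rfl
    simp only [Prod.mk.injEq, true_and] at this
    subst this
    exact hI.1 _ _ hp
  simp [wt, h1, h2]

lemma phi_eq [Fintype A] [Fintype B] (I : PrefSys A B) (M N : Finset (A × B)) :
    (phi I M N : ℤ) = (∑ a : A, if prefersA I a M N then (1 : ℤ) else 0)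
      + ∑ b : B, if prefersB I b M N then (1 : ℤ) else 0 := by
  unfold phi
  rw [Finset.card_filter]
  push_cast
  rw [Fintype.sum_sum_type]
  simp only [prefers]
  congr!

lemma vote_le (I : PrefSys A B) (hI : I.IsValid) (M N : Finset (A × B))
    (hM : IsMatching I M) (hN : IsMatching I N) (a : A) (b : B) (h : (a, b) ∈ N) :
    ((if prefersA I a N M then (1 : ℤ) else 0) - (if prefersA I a M N then (1 : ℤ) else 0))
    + ((if prefersB I b N M then (1 : ℤ) else 0) - (if prefersB I b M N then (1 : ℤ) else 0))
    ≤ wt I M a b := by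
  obtain ⟨hirA, htrA, htotA, hirB, htrB, htotB⟩ := hI
  have ha : ∀ b', (a, b') ∈ N → b' = b := fun b' hb' => by
    simpa using hN.2.1 _ hb' _ h rfl
  have hb : ∀ a', (a', b) ∈ N → a' = a := fun a' ha' => by
    simpa using hN.2.2 _ ha' _ h rfl
  have maA : matchedA N a := ⟨b, h⟩
  have maB : matchedB N b := ⟨a, h⟩
  have e1 : prefersA I a N M ↔ (¬ matchedA M a ∨ ∃ b', (a, b') ∈ M ∧ I.prefA a b b') := by
    constructor
    · rintro ⟨b1, h1, h2⟩
      rw [ha b1 h1] at h2; exact h2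
    · intro h2; exact ⟨b, h, h2⟩
  have e2 : prefersB I b N M ↔ (¬ matchedB M b ∨ ∃ a', (a', b) ∈ M ∧ I.prefB b a a') := by
    constructor
    · rintro ⟨b1, h1, h2⟩
      rw [hb b1 h1] at h2; exact h2
    · intro h2; exact ⟨a, h, h2⟩
  have e3 : prefersA I a M N ↔ ∃ b', (a, b') ∈ M ∧ I.prefA a b' b := by
    constructor
    · rintro ⟨b1, h1, h2 | ⟨b2, h2, h3⟩⟩
      · exact absurd maA h2
      · rw [ha b2 h2] at h3; exact ⟨b1, h1, h3⟩
    · rintro ⟨b1, h1, h2⟩; exact ⟨b1, h1, Or.inr ⟨b, h, h2⟩⟩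
  have e4 : prefersB I b M N ↔ ∃ a', (a', b) ∈ M ∧ I.prefB b a' a := by
    constructor
    · rintro ⟨b1, h1, h2 | ⟨b2, h2, h3⟩⟩
      · exact absurd maB h2
      · rw [hb b2 h2] at h3; exact ⟨b1, h1, h3⟩
    · rintro ⟨b1, h1, h2⟩; exact ⟨b1, h1, Or.inr ⟨a, h, h2⟩⟩
  by_cases hm : (a, b) ∈ M
  · rw [wt_zero_of_mem I ⟨hirA, htrA, htotA, hirB, htrB, htotB⟩ M hM a b hm]
    have n1 : ¬ prefersA I a N M := by
      rw [e1]
      rintro (h1 | ⟨b', h1, h2⟩)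
      · exact h1 ⟨b, hm⟩
      · have : b' = b := by simpa using hM.2.1 _ h1 _ hm rfl
        subst this; exact hirA _ _ h2
    have n2 : ¬ prefersB I b N M := by
      rw [e2]
      rintro (h1 | ⟨b', h1, h2⟩)
      · exact h1 ⟨a, hm⟩
      · have : b' = a := by simpa using hM.2.2 _ h1 _ hm rfl
        subst this; exact hirB _ _ h2
    rw [if_neg n1, if_neg n2]
    split_ifs <;> norm_num
  · have hE : I.E a b := hN.1 _ h
    have c1 : prefersA I a N M ∨ prefersA I a M N := by
      rw [e1, e3]
      by_cases hu : matchedA M a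
      · obtain ⟨b', hb'⟩ := hu
        have hne : b ≠ b' := by rintro rfl; exact hm hb'
        rcases htotA a b b' hE (hM.1 _ hb') hne with h1 | h1
        · exact Or.inl (Or.inr ⟨b', hb', h1⟩)
        · exact Or.inr ⟨b', hb', h1⟩
      · exact Or.inl (Or.inl hu)
    have c2 : prefersB I b N M ∨ prefersB I b M N := by
      rw [e2, e4]
      by_cases hu : matchedB M b
      · obtain ⟨b', hb'⟩ := hu
        have hne : a ≠ b' := by rintro rfl; exact hm hb'
        rcases htotB b a b' hE (hM.1 _ hb') hne with h1 | h1
        · exact Or.inl (Or.inr ⟨b', hb', h1⟩)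
        · exact Or.inr ⟨b', hb', h1⟩
      · exact Or.inl (Or.inl hu)
    have d1 : ¬ (prefersA I a N M ∧ prefersA I a M N) := by
      rw [e1, e3]
      rintro ⟨h1 | ⟨b1, h1, h2⟩, b2, h3, h4⟩
      · exact h1 ⟨b2, h3⟩
      · have : b1 = b2 := by simpa using hM.2.1 _ h1 _ h3 rfl
        subst this; exact hirA _ _ (htrA _ _ _ _ h2 h4)
    have d2 : ¬ (prefersB I b N M ∧ prefersB I b M N) := by
      rw [e2, e4]
      rintro ⟨h1 | ⟨b1, h1, h2⟩, b2, h3, h4⟩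
      · exact h1 ⟨b2, h3⟩
      · have : b1 = b2 := by simpa using hM.2.2 _ h1 _ h3 rfl
        subst this; exact hirB _ _ (htrB _ _ _ _ h2 h4)
    have eB : Blocks I M a b ↔ (prefersA I a N M ∧ prefersB I b N M) := by
      rw [e1, e2]
      exact ⟨fun h => h.2.2, fun h => ⟨hE, hm, h⟩⟩
    have ew : wt I M a b = if prefersA I a N M ∧ prefersB I b N M then 2 else
        if prefersA I a M N ∧ prefersB I b M N then -2 else 0 := by
      simp only [wt, eB, e3, e4]
    rw [ew]
    clear ew eB e1 e2 e3 e4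
    rcases c1 with p1 | p1
    · have p2 := fun x => d1 ⟨p1, x⟩
      rcases c2 with p3 | p3
      · have p4 := fun x => d2 ⟨p3, x⟩
        rw [if_pos p1, if_neg p2, if_pos p3, if_neg p4, if_pos ⟨p1, p3⟩]; norm_num
      · have p4 := fun x => d2 ⟨x, p3⟩
        rw [if_pos p1, if_neg p2, if_neg p4, if_pos p3, if_neg (fun h => p4 h.2),
          if_neg (fun h => p2 h.1)]; norm_num
    · have p2 := fun x => d1 ⟨x, p1⟩
      rcases c2 with p3 | p3
      · have p4 := fun x => d2 ⟨p3, x⟩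
        rw [if_neg p2, if_pos p1, if_pos p3, if_neg p4, if_neg (fun h => p2 h.1),
          if_neg (fun h => p4 h.2)]; norm_num
      · have p4 := fun x => d2 ⟨x, p3⟩
        rw [if_neg p2, if_pos p1, if_neg p4, if_pos p3, if_neg (fun h => p2 h.1),
          if_pos ⟨p1, p3⟩]; norm_num

lemma sum_univ_le {C D : Type*} [Fintype C] (S : Finset D) (g : D → C) (f : C → ℤ)
    (hinj : ∀ x ∈ S, ∀ y ∈ S, g x = g y → x = y)
    (hneg : ∀ c, (∀ x ∈ S, g x ≠ c) → f c ≤ 0) :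
    ∑ c, f c ≤ ∑ x ∈ S, f (g x) := by
  rw [← Finset.sum_image (f := f) hinj, ← Finset.sum_add_sum_compl (S.image g) f]
  have : ∑ c ∈ (S.image g)ᶜ, f c ≤ 0 := by
    apply Finset.sum_nonpos
    intro c hc
    apply hneg
    intro x hx h
    simp only [Finset.mem_compl, Finset.mem_image] at hc
    exact hc ⟨x, hx, h⟩
  linarith

/-- For maximum matchings `M` and `N`,
`Δ(N,M) ≤ Σ_ρ wt_M(ρ)` where `ρ` ranges over the connected components (alternating paths
and alternating cycles wrt `M`) of `M ⊕ N`; since these components partition the edge set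
of `M ⊕ N`, this sum equals `Σ_{e ∈ M ⊕ N} wt_M(e)`. -/
theorem stmt2 {A B : Type*} [Fintype A] [Fintype B] [DecidableEq A] [DecidableEq B]
    (I : PrefSys A B) (hI : I.IsValid) (M N : Finset (A × B))
    (hM : IsMaximumMatching I M) (hN : IsMaximumMatching I N) :
    Delta I N M ≤ ∑ e ∈ symmDiff M N, wt I M e.1 e.2 := by
  have key : Delta I N M ≤ ∑ e ∈ N, wt I M e.1 e.2 := by
    have hv := fun e he => vote_le I hI M N hM.1 hN.1 (Prod.fst e) (Prod.snd e) he
    refine le_trans ?_ (Finset.sum_le_sum hv)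
    unfold Delta
    rw [phi_eq, phi_eq, Finset.sum_add_distrib]
    have h1 := sum_univ_le N Prod.fst
      (fun a => (if prefersA I a N M then (1 : ℤ) else 0) - (if prefersA I a M N then (1 : ℤ) else 0))
      hN.1.2.1 (by
        intro a ha
        have : ¬ prefersA I a N M := by
          rintro ⟨b, hb, _⟩; exact ha _ hb rfl
        simp only [if_neg this]
        split_ifs <;> norm_num)
    have h2 := sum_univ_le N Prod.snd
      (fun a => (if prefersB I a N M then (1 : ℤ) else 0) - (if prefersB I a M N then (1 : ℤ) else 0))
      hN.1.2.2 (by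
        intro a ha
        have : ¬ prefersB I a N M := by
          rintro ⟨b, hb, _⟩; exact ha _ hb rfl
        simp only [if_neg this]
        split_ifs <;> norm_num)
    rw [Finset.sum_sub_distrib] at h1 h2
    linarith
  refine key.trans (le_of_eq ?_)
  have z := fun e he => wt_zero_of_mem I hI M hM.1 (Prod.fst e) (Prod.snd e) he
  have s1 : ∑ e ∈ N, wt I M e.1 e.2 = ∑ e ∈ M ∪ N, wt I M e.1 e.2 := by
    apply Finset.sum_subset Finset.subset_union_right
    intro e he hn
    exact z e ((Finset.mem_union.mp he).resolve_right hn)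
  rw [s1]
  symm
  apply Finset.sum_subset
  · intro e he
    rw [Finset.mem_symmDiff] at he
    rw [Finset.mem_union]; tauto
  · intro e he hn
    rw [Finset.mem_symmDiff] at hn
    rw [Finset.mem_union] at he
    exact z e (by tauto)

end PopMax
end
end
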